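/- (Existence of a gap-minimizing potential) Let p > 2. For V ∈ S_p define, for k = 1, 2, λ_k(V) = inf over k-dimensional subspaces E of H₀(Ω) of sup{ a_V(u,u) : u ∈ E, ‖u‖_{L²(Ω)} = 1 }, and let Γ(V) = λ₂(V) − λ₁(V) be the fundamental gap. Then the infimum of Γ over S_p is attained: there exists V* ∈ S_p with Γ(V*) = inf{ Γ(V) : V ∈ S_p }. -/

import Mathlib

open MeasureTheory Set Filter

noncomputable section

/-- The open unit square `Ω = (0,1) × (0,1)` in `ℝ²`. -/
def Omega : Set (ℝ × ℝ) := Ioo (0:ℝ) 1 ×ˢ Ioo (0:ℝ) 1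

/-- Test functions on a set `s`: smooth with compact support contained in `s`. -/
def IsTestOn (s : Set (ℝ × ℝ)) (φ : ℝ × ℝ → ℝ) : Prop :=
  ContDiff ℝ (⊤ : ℕ∞) φ ∧ HasCompactSupport φ ∧ tsupport φ ⊆ s

/-- Classical partial derivative in the `x`-direction. -/
def pdx (φ : ℝ × ℝ → ℝ) (p : ℝ × ℝ) : ℝ := fderiv ℝ φ p (1, 0)

/-- Classical partial derivative in the `y`-direction. -/
def pdy (φ : ℝ × ℝ → ℝ) (p : ℝ × ℝ) : ℝ := fderiv ℝ φ p (0, 1)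

/-- `g` is a weak `x`-partial derivative of `u` on `s`. -/
def HasWeakDerivXOn (s : Set (ℝ × ℝ)) (u g : ℝ × ℝ → ℝ) : Prop :=
  LocallyIntegrableOn u s volume ∧ LocallyIntegrableOn g s volume ∧
  ∀ φ : ℝ × ℝ → ℝ, IsTestOn s φ →
    ∫ p in s, u p * pdx φ p = - ∫ p in s, g p * φ p

/-- `g` is a weak `y`-partial derivative of `u` on `s`. -/
def HasWeakDerivYOn (s : Set (ℝ × ℝ)) (u g : ℝ × ℝ → ℝ) : Prop :=
  LocallyIntegrableOn u s volume ∧ LocallyIntegrableOn g s volume ∧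
  ∀ φ : ℝ × ℝ → ℝ, IsTestOn s φ →
    ∫ p in s, u p * pdy φ p = - ∫ p in s, g p * φ p

/-- Test functions on `Ω`. -/
def IsTest (φ : ℝ × ℝ → ℝ) : Prop := IsTestOn Omega φ

/-- Membership in the weighted Sobolev space `𝓗¹(Ω)`, with weak derivatives `gx, gy`:
`u ∈ L²(Ω)`, `gx = ∂ₓu`, `gy = ∂_y u` weakly, and `y^α₁ gx, x^α₂ gy ∈ L²(Ω)`. -/
structure MemH1 (α₁ α₂ : ℝ) (u gx gy : ℝ × ℝ → ℝ) : Prop where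
  memL2 : MemLp u 2 (volume.restrict Omega)
  weakX : HasWeakDerivXOn Omega u gx
  weakY : HasWeakDerivYOn Omega u gy
  wgx : MemLp (fun p => p.2 ^ α₁ * gx p) 2 (volume.restrict Omega)
  wgy : MemLp (fun p => p.1 ^ α₂ * gy p) 2 (volume.restrict Omega)

/-- The `𝓗¹(Ω)` norm of `u` (with weak derivatives `gx, gy`). -/
def H1Norm (α₁ α₂ : ℝ) (u gx gy : ℝ × ℝ → ℝ) : ℝ :=
  Real.sqrt ((∫ p in Omega, (u p) ^ 2) +
    (∫ p in Omega, (p.2 ^ α₁ * gx p) ^ 2) +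
    (∫ p in Omega, (p.1 ^ α₂ * gy p) ^ 2))

/-- Membership in `𝓗₀¹(Ω)`: member of `𝓗¹(Ω)` approximable in the `𝓗¹` norm by
test functions. -/
def MemH10 (α₁ α₂ : ℝ) (u gx gy : ℝ × ℝ → ℝ) : Prop :=
  MemH1 α₁ α₂ u gx gy ∧
  ∀ ε : ℝ, 0 < ε → ∃ φ : ℝ × ℝ → ℝ, IsTest φ ∧
    H1Norm α₁ α₂ (fun p => u p - φ p) (fun p => gx p - pdx φ p)
      (fun p => gy p - pdy φ p) < ε

/-- Membership in `H₀(Ω) = {u ∈ 𝓗₀¹(Ω) : ∫_Ω V u² < ∞}`. -/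
def MemH0 (α₁ α₂ : ℝ) (V u gx gy : ℝ × ℝ → ℝ) : Prop :=
  MemH10 α₁ α₂ u gx gy ∧
  IntegrableOn (fun p => V p * (u p) ^ 2) Omega volume

/-- The bilinear form `a(u,v)` associated with the sub-elliptic operator with potential `V`. -/
def aForm (α₁ α₂ : ℝ) (V u gx gy v hx hy : ℝ × ℝ → ℝ) : ℝ :=
  ∫ p in Omega, ((p.2 ^ α₁ * gx p) * (p.2 ^ α₁ * hx p) +
    (p.1 ^ α₂ * gy p) * (p.1 ^ α₂ * hy p) + V p * u p * v p)

/-- The bilinear form `a₁(u,v)` (no potential). -/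
def a1Form (α₁ α₂ : ℝ) (u gx gy v hx hy : ℝ × ℝ → ℝ) : ℝ :=
  ∫ p in Omega, ((p.2 ^ α₁ * gx p) * (p.2 ^ α₁ * hx p) +
    (p.1 ^ α₂ * gy p) * (p.1 ^ α₂ * hy p))

/-- Membership in `S_p = {V ∈ L^p(Ω) : V ≥ 0 a.e., ‖V‖_{L^p(Ω)} ≤ M}`. -/
def MemSp (ppow M : ℝ) (V : ℝ × ℝ → ℝ) : Prop :=
  MemLp V (ENNReal.ofReal ppow) (volume.restrict Omega) ∧
  (∀ᵐ p ∂(volume.restrict Omega), 0 ≤ V p) ∧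
  eLpNorm V (ENNReal.ofReal ppow) (volume.restrict Omega) ≤ ENNReal.ofReal M

/-- `u` (with weak derivatives `gx, gy`) is an eigenfunction of the sub-elliptic operator
with potential `V` for the eigenvalue `lam`. -/
def IsEigenfun (α₁ α₂ : ℝ) (V : ℝ × ℝ → ℝ) (lam : ℝ) (u gx gy : ℝ × ℝ → ℝ) : Prop :=
  MemH0 α₁ α₂ V u gx gy ∧
  ∀ v hx hy : ℝ × ℝ → ℝ, MemH0 α₁ α₂ V v hx hy →
    aForm α₁ α₂ V u gx gy v hx hy = lam * ∫ p in Omega, u p * v p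

/-- The first eigenvalue `λ₁(V) = inf { a(u,u) : u ∈ H₀(Ω), ‖u‖_{L²} = 1 }`. -/
def lam1 (α₁ α₂ : ℝ) (V : ℝ × ℝ → ℝ) : ℝ :=
  sInf { r | ∃ u gx gy : ℝ × ℝ → ℝ, MemH0 α₁ α₂ V u gx gy ∧
    (∫ p in Omega, (u p) ^ 2) = 1 ∧ r = aForm α₁ α₂ V u gx gy u gx gy }

/-- `sup { a(u,u) : u ∈ span(φ), ‖u‖_{L²(Ω)} = 1 }` for a finite family `φ` with
weak derivatives `φx, φy`. -/
def rayleighSup (α₁ α₂ : ℝ) (V : ℝ × ℝ → ℝ) {k : ℕ} (φ φx φy : Fin k → ℝ × ℝ → ℝ) : ℝ :=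
  sSup { s | ∃ c : Fin k → ℝ,
    (∫ p in Omega, (∑ i, c i * φ i p) ^ 2) = 1 ∧
    s = aForm α₁ α₂ V (fun p => ∑ i, c i * φ i p) (fun p => ∑ i, c i * φx i p)
      (fun p => ∑ i, c i * φy i p) (fun p => ∑ i, c i * φ i p)
      (fun p => ∑ i, c i * φx i p) (fun p => ∑ i, c i * φy i p) }

/-- The set of values `sup { a(u,u) : u ∈ E, ‖u‖ = 1 }` over `k`-dimensional
subspaces `E` of `H₀(Ω)` (represented by `L²(Ω)`-linearly independent families of
`k` elements of `H₀(Ω)`). -/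
def minmaxSet (α₁ α₂ : ℝ) (V : ℝ × ℝ → ℝ) (k : ℕ) : Set ℝ :=
  { r | ∃ φ φx φy : Fin k → ℝ × ℝ → ℝ,
      (∀ i, MemH0 α₁ α₂ V (φ i) (φx i) (φy i)) ∧
      (∀ c : Fin k → ℝ, (∀ᵐ p ∂(volume.restrict Omega), ∑ i, c i * φ i p = 0) → c = 0) ∧
      r = rayleighSup α₁ α₂ V φ φx φy }

/-- The `k`-th eigenvalue via the min-max principle. -/
def lamk (α₁ α₂ : ℝ) (V : ℝ × ℝ → ℝ) (k : ℕ) : ℝ := sInf (minmaxSet α₁ α₂ V k)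

/-- Membership in `U = (𝓗₀¹(Ω) ∩ L^{2q}(Ω)) \ {0}`. -/
def MemU (α₁ α₂ qe : ℝ) (u gx gy : ℝ × ℝ → ℝ) : Prop :=
  MemH10 α₁ α₂ u gx gy ∧
  MemLp u (ENNReal.ofReal (2 * qe)) (volume.restrict Omega) ∧
  ¬ (∀ᵐ p ∂(volume.restrict Omega), u p = 0)

/-- The functional `J(u) = (a₁(u,u) + M ‖u‖_{L^{2q}(Ω)}²) / ‖u‖_{L²(Ω)}²`. -/
def Jfun (α₁ α₂ M qe : ℝ) (u gx gy : ℝ × ℝ → ℝ) : ℝ :=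
  (a1Form α₁ α₂ u gx gy u gx gy +
    M * (∫ p in Omega, |u p| ^ (2 * qe)) ^ (1 / qe)) / (∫ p in Omega, (u p) ^ 2)

/-- The fundamental gap `Γ(V) = λ₂(V) − λ₁(V)`, with `λ₁, λ₂` given by the min-max
characterization over 1- and 2-dimensional subspaces of `H₀(Ω)`. -/
def gap (α₁ α₂ : ℝ) (V : ℝ × ℝ → ℝ) : ℝ :=
  lamk α₁ α₂ V 2 - lamk α₁ α₂ V 1

/-!
`λ₁` is an infimum of the functionals `V ↦ a_V(u, u)`, each of which is weakly continuous in `V`, so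
it is weakly upper semicontinuous. Conversely every `λ_k` is weakly lower semicontinuous: along
`V_n ⇀ V`, almost optimal `k`-frames are bounded in `𝓗₀¹(Ω)`, the compact embedding
`𝓗₀¹(Ω) ⊂ L²(Ω)` lets them converge weakly to a `k`-frame that is still linearly independent in
`L²(Ω)`, and `a_V(u, u)` is jointly weakly lower semicontinuous. Hence the gap is weakly lower
semicontinuous on `S_p`, which is a closed bounded convex subset of `L²(Ω)`, and it attains its
minimum there.

Both the compactness of the embedding and the bound `‖u v‖_{L²} ≤ C ‖u‖_{𝓗¹} ‖v‖_{𝓗¹}`, which makes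
`∫ V u v` continuous for `V ∈ L²(Ω)`, come from a degenerate Ladyzhenskaya inequality. For a test
function, `φ(x, y)⁴ ≤ F(x) G(y)` with factors controlled by the energy because
`α ≤ 1/2` gives `y ≤ y ^ {2 α}`. This bounds the `L⁴` norm, and with it the mass near the axes; away
from the axes the Poincaré inequality on the cells of a grid applies.
-/

open scoped Topology ENNReal NNReal

section WeakConvergence

variable {H F : Type*} [NormedAddCommGroup H] [InnerProductSpace ℝ H]
  [NormedAddCommGroup F] [InnerProductSpace ℝ F] {β : Type*} {l : Filter β}

lemma tendsto_clm_of_tendsto_toWeakSpace {x : β → H} {a : H}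
    (hx : Tendsto (fun i => toWeakSpace ℝ H (x i)) l (𝓝 (toWeakSpace ℝ H a)))
    (ℓ : StrongDual ℝ H) : Tendsto (fun i => ℓ (x i)) l (𝓝 (ℓ a)) :=
  ((WeakBilin.eval_continuous (topDualPairing ℝ H).flip ℓ).tendsto _).comp hx

lemma tendsto_toWeakSpace_of_tendsto_inner [CompleteSpace H] {x : β → H} {a : H}
    (hx : ∀ z, Tendsto (fun i => inner ℝ z (x i)) l (𝓝 (inner ℝ z a))) :
    Tendsto (fun i => toWeakSpace ℝ H (x i)) l (𝓝 (toWeakSpace ℝ H a)) := by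
  have separates : Function.Injective (topDualPairing ℝ H).flip := fun a b hab =>
    ext_inner_left ℝ fun z => LinearMap.congr_fun hab (innerSL ℝ z)
  refine (WeakBilin.tendsto_iff_forall_eval_tendsto _ separates).2 fun ℓ => ?_
  obtain ⟨z, rfl⟩ := (InnerProductSpace.toDual ℝ H).surjective ℓ
  exact hx z

lemma isCompact_toWeakSpace_image_closedBall [CompleteSpace H] (C : ℝ) :
    IsCompact (toWeakSpace ℝ H '' Metric.closedBall 0 C) := by
  let riesz : WeakDual ℝ H → WeakSpace ℝ H := fun f =>
    toWeakSpace ℝ H ((InnerProductSpace.toDual ℝ H).symm (WeakDual.toStrongDual f))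
  have hriesz : Continuous riesz := continuous_iff_continuousAt.2 fun f =>
    tendsto_toWeakSpace_of_tendsto_inner fun z => by
      simp only [← real_inner_comm z, InnerProductSpace.toDual_symm_apply]
      exact (WeakDual.eval_continuous z).tendsto f
  have himage : riesz '' (WeakDual.toStrongDual ⁻¹' Metric.closedBall 0 C) =
      toWeakSpace ℝ H '' Metric.closedBall 0 C := by
    rw [← image_image (toWeakSpace ℝ H), ← image_image (InnerProductSpace.toDual ℝ H).symm,
      image_preimage_eq _ WeakDual.toStrongDual.surjective, LinearIsometryEquiv.image_closedBall,
      map_zero]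
  exact himage ▸ (WeakDual.isCompact_closedBall 0 C).image hriesz

lemma isCompact_toWeakSpace_image [CompleteSpace H] {S : Set H} (hconvex : Convex ℝ S)
    (hclosed : IsClosed S) (hbdd : Bornology.IsBounded S) : IsCompact (toWeakSpace ℝ H '' S) := by
  obtain ⟨C, hC⟩ := hbdd.subset_closedBall 0
  refine (isCompact_toWeakSpace_image_closedBall C).of_isClosed_subset ?_ (image_mono hC)
  rw [← hclosed.closure_eq, hconvex.toWeakSpace_closure ℝ]
  exact isClosed_closure

lemma exists_tendsto_toWeakSpace [CompleteSpace H] {U : Ultrafilter β} {x : β → H} {C : ℝ}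
    (hC : ∀ᶠ i in U, ‖x i‖ ≤ C) :
    ∃ a, Tendsto (fun i => toWeakSpace ℝ H (x i)) U (𝓝 (toWeakSpace ℝ H a)) := by
  obtain ⟨_, ⟨a, -, rfl⟩, ha⟩ := (isCompact_toWeakSpace_image_closedBall C).ultrafilter_le_nhds
    (U.map fun i => toWeakSpace ℝ H (x i)) <| le_principal_iff.2 <| mem_map.2 <|
      hC.mono fun i hi => mem_image_of_mem _ (mem_closedBall_zero_iff.2 hi)
  exact ⟨a, ha⟩

lemma tendsto_of_isCompactOperator {T : H →L[ℝ] F} (hT : IsCompactOperator T) {U : Ultrafilter β}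
    {x : β → H} {a : H} {C : ℝ} (hC : ∀ᶠ i in U, ‖x i‖ ≤ C)
    (hx : Tendsto (fun i => toWeakSpace ℝ H (x i)) U (𝓝 (toWeakSpace ℝ H a))) :
    Tendsto (fun i => T (x i)) U (𝓝 (T a)) := by
  obtain ⟨K, hK, hTK⟩ := hT.image_closedBall_subset_compact (f := T.toLinearMap) C
  obtain ⟨b, -, hb⟩ := hK.ultrafilter_le_nhds (U.map fun i => T (x i)) <| le_principal_iff.2 <|
    mem_map.2 <| hC.mono fun i hi => hTK (mem_image_of_mem _ (mem_closedBall_zero_iff.2 hi))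
  have hab : T a = b := ext_inner_left ℝ fun z => tendsto_nhds_unique
    (tendsto_clm_of_tendsto_toWeakSpace hx ((innerSL ℝ z).comp T))
    ((tendsto_const_nhds (x := z)).inner hb)
  exact hab ▸ hb

lemma isCompactOperator_of_forall_norm_sq_le [CompleteSpace H] {T : H →L[ℝ] F}
    (hT : ∀ ε > 0, ∃ (κ : Type) (_ : Fintype κ) (ℓ : κ → StrongDual ℝ H),
      ∀ x, ‖T x‖ ^ 2 ≤ ∑ k, ℓ k x ^ 2 + ε * ‖x‖ ^ 2) : IsCompactOperator T := by
  have hcont : ContinuousOn (fun x : WeakSpace ℝ H => T ((toWeakSpace ℝ H).symm x))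
      (toWeakSpace ℝ H '' Metric.closedBall 0 1) := by
    rintro _ ⟨a, ha, rfl⟩
    refine Metric.tendsto_nhds.2 fun ε hε => ?_
    obtain ⟨κ, _, ℓ, hℓ⟩ := hT (ε ^ 2 / 8) (by positivity)
    have hsum : Tendsto (fun x : WeakSpace ℝ H => ∑ k, ℓ k ((toWeakSpace ℝ H).symm x - a) ^ 2)
        (𝓝[toWeakSpace ℝ H '' Metric.closedBall 0 1] (toWeakSpace ℝ H a)) (𝓝 0) := by
      have h := tendsto_finsetSum Finset.univ fun k _ =>
        ((tendsto_clm_of_tendsto_toWeakSpace (x := (toWeakSpace ℝ H).symm) (a := a) tendsto_id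
          (ℓ k)).sub_const (ℓ k a)).pow 2
      simpa [map_sub] using h.mono_left nhdsWithin_le_nhds
    filter_upwards [hsum.eventually_lt_const (show 0 < ε ^ 2 / 2 by positivity),
      self_mem_nhdsWithin] with _ hlt ⟨x, hx, hxy⟩
    subst hxy
    simp only [LinearEquiv.symm_apply_apply] at hlt ⊢
    have hdiff : ‖x - a‖ ^ 2 ≤ 2 ^ 2 := pow_le_pow_left₀ (norm_nonneg _) (by
      linarith [norm_sub_le x a, mem_closedBall_zero_iff.1 hx, mem_closedBall_zero_iff.1 ha]) 2
    rw [dist_eq_norm, ← map_sub]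
    refine lt_of_pow_lt_pow_left₀ 2 hε.le ?_
    nlinarith [hℓ (x - a), sq_nonneg ε]
  refine (isCompactOperator_iff_image_closedBall_subset_compact T.toLinearMap one_pos).2
    ⟨_, (isCompact_toWeakSpace_image_closedBall 1).image_of_continuousOn hcont, ?_⟩
  simp [image_image]

end WeakConvergence

section MinMax

variable {D L : Type*} [NormedAddCommGroup D] [InnerProductSpace ℝ D]
  [NormedAddCommGroup L] [InnerProductSpace ℝ L] {ι : D →L[ℝ] L} {q : D → ℝ} {k : ℕ} {r : ℝ}

/-- The Courant–Fischer values of a functional `q` relative to an embedding `ι : D → L`: the suprema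
of `q` over the `L`-unit spheres of the `k`-dimensional subspaces of `D`. -/
def minmaxValues (ι : D →L[ℝ] L) (q : D → ℝ) (k : ℕ) : Set ℝ :=
  (fun w : Fin k → D => sSup (q '' {x | x ∈ Submodule.span ℝ (range w) ∧ ‖ι x‖ = 1})) ''
    {w | LinearIndependent ℝ (ι ∘ w)}

/-- The `k`-th min-max value (eigenvalue) of `q` relative to `ι`. -/
def minmaxValue (ι : D →L[ℝ] L) (q : D → ℝ) (k : ℕ) : ℝ := sInf (minmaxValues ι q k)

/-- `q ≤ r` on the `L`-unit sphere of some `k`-dimensional subspace, which is presented by an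
`L`-orthonormal basis. -/
def LeOnSubspace (ι : D →L[ℝ] L) (q : D → ℝ) (k : ℕ) (r : ℝ) : Prop :=
  ∃ e : Fin k → D, Orthonormal ℝ (ι ∘ e) ∧
    ∀ x ∈ Submodule.span ℝ (range e), ‖ι x‖ = 1 → q x ≤ r

lemma exists_orthonormal_span_eq {w : Fin k → D} (hw : LinearIndependent ℝ (ι ∘ w)) :
    ∃ e : Fin k → D, Orthonormal ℝ (ι ∘ e) ∧
      Submodule.span ℝ (range e) = Submodule.span ℝ (range w) := by
  have hcard : Module.finrank ℝ (Submodule.span ℝ (range (ι ∘ w))) = k := by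
    rw [finrank_span_eq_card hw, Fintype.card_fin]
  have := FiniteDimensional.span_of_finite ℝ (finite_range (ι ∘ w))
  let b := (stdOrthonormalBasis ℝ (Submodule.span ℝ (range (ι ∘ w)))).reindex (finCongr hcard)
  have hb : Orthonormal ℝ fun i => (b i : L) := b.orthonormal.comp_linearIsometry
    (Submodule.span ℝ (range (ι ∘ w))).subtypeₗᵢ
  have hmap : Submodule.span ℝ (range (ι ∘ w)) ≤
      (Submodule.span ℝ (range w)).map ι.toLinearMap := by
    rw [Submodule.map_span, ← range_comp, ContinuousLinearMap.coe_coe]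
  choose e hew hιe using fun i => Submodule.mem_map.1 (hmap (b i).2)
  have he : ι ∘ e = fun i => (b i : L) := funext hιe
  have := FiniteDimensional.span_of_finite ℝ (finite_range w)
  refine ⟨e, he ▸ hb, Submodule.eq_of_le_of_finrank_eq
    (Submodule.span_le.2 (range_subset_iff.2 hew)) ?_⟩
  rw [finrank_span_eq_card (LinearIndependent.of_comp ι.toLinearMap (he ▸ hb.linearIndependent)),
    finrank_span_eq_card (LinearIndependent.of_comp ι.toLinearMap hw)]

lemma norm_sq_map_sum_smul {e : Fin k → D} (he : Orthonormal ℝ (ι ∘ e)) (c : Fin k → ℝ) :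
    ‖ι (∑ i, c i • e i)‖ ^ 2 = ∑ i, c i ^ 2 := by
  have h := he.inner_sum c c Finset.univ
  simp only [Function.comp_apply, conj_trivial, ← map_smul, ← map_sum,
    real_inner_self_eq_norm_sq] at h
  simpa only [sq] using h

lemma isCompact_span_unitSphere {e : Fin k → D} (he : Orthonormal ℝ (ι ∘ e)) :
    IsCompact {x | x ∈ Submodule.span ℝ (range e) ∧ ‖ι x‖ = 1} := by
  have hnorm (c : EuclideanSpace ℝ (Fin k)) : ‖ι (∑ i, c i • e i)‖ = ‖c‖ := by
    rw [← sq_eq_sq₀ (norm_nonneg _) (norm_nonneg _), norm_sq_map_sum_smul he,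
      EuclideanSpace.real_norm_sq_eq]
  have himage : {x | x ∈ Submodule.span ℝ (range e) ∧ ‖ι x‖ = 1} =
      (fun c : EuclideanSpace ℝ (Fin k) => ∑ i, c i • e i) '' Metric.sphere 0 1 := by
    ext x
    constructor
    · rintro ⟨hx, hιx⟩
      obtain ⟨c, rfl⟩ := (Submodule.mem_span_range_iff_exists_fun ℝ).1 hx
      exact ⟨WithLp.toLp 2 c, by simpa [← hnorm] using hιx, rfl⟩
    · rintro ⟨c, hc, rfl⟩
      exact ⟨Submodule.sum_mem _ fun i _ => Submodule.smul_mem _ _ (Submodule.subset_span ⟨i, rfl⟩),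
        (hnorm c).trans (mem_sphere_zero_iff_norm.1 hc)⟩
  rw [himage]
  exact (isCompact_sphere _ _).image (by fun_prop)

lemma minmaxValues_nonneg (hq : ∀ x, 0 ≤ q x) (hr : r ∈ minmaxValues ι q k) : 0 ≤ r := by
  obtain ⟨w, -, rfl⟩ := hr
  exact Real.sSup_nonneg (forall_mem_image.2 fun x _ => hq x)

lemma minmaxValue_nonneg (hq : ∀ x, 0 ≤ q x) : 0 ≤ minmaxValue ι q k :=
  Real.sInf_nonneg fun _ => minmaxValues_nonneg hq

lemma minmaxValue_le (hq : ∀ x, 0 ≤ q x) (hr : 0 ≤ r) (h : LeOnSubspace ι q k r) :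
    minmaxValue ι q k ≤ r := by
  obtain ⟨e, he, hle⟩ := h
  exact (csInf_le ⟨0, fun _ => minmaxValues_nonneg hq⟩ ⟨e, he.linearIndependent, rfl⟩).trans
    (Real.sSup_le (forall_mem_image.2 fun x hx => hle x hx.1 hx.2) hr)

lemma minmaxValue_eq_zero (h : ¬ ∃ w : Fin k → D, LinearIndependent ℝ (ι ∘ w)) :
    minmaxValue ι q k = 0 := by
  have hempty : minmaxValues ι q k = ∅ := image_eq_empty.2 (eq_empty_iff_forall_notMem.2
    fun w hw => h ⟨w, hw⟩)
  rw [minmaxValue, hempty, Real.sInf_empty]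

lemma leOnSubspace_of_minmaxValue_lt (hq : Continuous q)
    (hex : ∃ w : Fin k → D, LinearIndependent ℝ (ι ∘ w)) (hr : minmaxValue ι q k < r) :
    LeOnSubspace ι q k r := by
  obtain ⟨_, ⟨w, hw, rfl⟩, hlt⟩ := exists_lt_of_csInf_lt (image_nonempty.2 hex) hr
  obtain ⟨e, he, hspan⟩ := exists_orthonormal_span_eq hw
  refine ⟨e, he, fun x hx hιx => le_trans ?_ hlt.le⟩
  exact le_csSup (hspan ▸ ((isCompact_span_unitSphere he).image hq).bddAbove)
    (mem_image_of_mem q ⟨hspan ▸ hx, hιx⟩)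

lemma leOnSubspace_one_of_norm_eq_one (hq : ∀ x, q (-x) = q x) {w : D} (hw : ‖ι w‖ = 1) :
    LeOnSubspace ι q 1 (q w) := by
  refine ⟨fun _ => w, by simpa [orthonormal_subsingleton_iff] using hw, fun x hx hιx => ?_⟩
  obtain ⟨c, rfl⟩ := Submodule.mem_span_singleton.1 (range_const (ι := Fin 1) ▸ hx)
  have hc : |c| = 1 := by simpa [norm_smul, hw] using hιx
  rcases eq_or_eq_neg_of_abs_eq hc with rfl | rfl
  · rw [one_smul]
  · rw [neg_one_smul, hq]

end MinMax

section PerturbedForm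

variable {D L : Type*} [NormedAddCommGroup D] [InnerProductSpace ℝ D]
  [NormedAddCommGroup L] [InnerProductSpace ℝ L]
  {ι : D →L[ℝ] L} {m : D →L[ℝ] D →L[ℝ] L} {β : Type*} {U : Ultrafilter β}

/-- The form of an operator perturbed by a potential `v`: for the graph norm
`‖w‖² = a₁(w, w) + ‖ι w‖²` of a form `a₁`, and the pointwise product `m`, this is
`a₁(w, w) + ∫ v w²`. -/
def perturbedForm (ι : D →L[ℝ] L) (m : D →L[ℝ] D →L[ℝ] L) (v : L) (w : D) : ℝ :=
  ‖w‖ ^ 2 - ‖ι w‖ ^ 2 + inner ℝ v (m w w)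

/-- The potentials `v` for which `w ↦ ⟪v, m w w⟫` is a nonnegative form; in the concrete case these
include the functions `v ≥ 0`. -/
def nonnegPotentials (m : D →L[ℝ] D →L[ℝ] L) : Set L := {v | ∀ w, 0 ≤ inner ℝ v (m w w)}

/-- An abstract energy space: a contractive compact embedding `ι : D → L` with a symmetric product
`m : D × D → L` such that multiplication by a dense set of elements is bounded in the norm of
`L`. -/
structure IsCompactEnergySpace (ι : D →L[ℝ] L) (m : D →L[ℝ] D →L[ℝ] L) : Prop where
  norm_le : ∀ w, ‖ι w‖ ≤ ‖w‖
  isCompactOperator : IsCompactOperator ι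
  symm : ∀ w w', m w w' = m w' w
  dense : Dense {φ | ∃ C, ∀ w, ‖m w φ‖ ≤ C * ‖ι w‖}

lemma continuous_perturbedForm (v : L) : Continuous (perturbedForm ι m v) := by
  have : Continuous fun w => m w w := m.continuous.clm_apply continuous_id
  unfold perturbedForm
  fun_prop

lemma perturbedForm_neg (v : L) (w : D) : perturbedForm ι m v (-w) = perturbedForm ι m v w := by
  simp [perturbedForm]

lemma perturbedForm_nonneg (hι : ∀ w, ‖ι w‖ ≤ ‖w‖) {v : L} (hv : v ∈ nonnegPotentials m) (w : D) :
    0 ≤ perturbedForm ι m v w :=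
  add_nonneg (sub_nonneg.2 (pow_le_pow_left₀ (norm_nonneg _) (hι w) 2)) (hv w)

lemma norm_sq_le_of_perturbedForm_le {v : L} (hv : v ∈ nonnegPotentials m) {w : D} {r : ℝ}
    (hw : ‖ι w‖ = 1) (hr : perturbedForm ι m v w ≤ r) : ‖w‖ ^ 2 ≤ r + 1 := by
  have := hv w
  rw [perturbedForm, hw] at hr
  linarith

lemma tangent_le_perturbedForm (hsymm : ∀ w w', m w w' = m w' w) {v : L}
    (hv : v ∈ nonnegPotentials m) (a φ w : D) :
    2 * inner ℝ a w - ‖a‖ ^ 2 - ‖ι w‖ ^ 2 + (2 * inner ℝ v (m w φ) - inner ℝ v (m φ φ)) ≤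
      perturbedForm ι m v w := by
  have hpot := hv (w - φ)
  have hnorm := sq_nonneg ‖a - w‖
  rw [norm_sub_sq_real] at hnorm
  simp only [map_sub, _root_.sub_apply, inner_sub_right, hsymm φ w] at hpot
  rw [perturbedForm]
  linarith

lemma tendsto_inner_mul_of_bounded_mul {w : β → D} {a : D} {v : β → L} {v₀ : L} {M : ℝ}
    (hw : Tendsto (fun i => ι (w i)) U (𝓝 (ι a))) (hM : ∀ᶠ i in U, ‖v i‖ ≤ M)
    (hv : Tendsto (fun i => toWeakSpace ℝ L (v i)) U (𝓝 (toWeakSpace ℝ L v₀))) {φ : D}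
    (hφ : ∃ C, ∀ w, ‖m w φ‖ ≤ C * ‖ι w‖) :
    Tendsto (fun i => inner ℝ (v i) (m (w i) φ)) U (𝓝 (inner ℝ v₀ (m a φ))) := by
  obtain ⟨C, hC⟩ := hφ
  have hzero : Tendsto (fun i => m (w i) φ - m a φ) U (𝓝 0) := by
    refine squeeze_zero_norm (a := fun i => C * ‖ι (w i) - ι a‖) (fun i => ?_) ?_
    · simpa only [map_sub, _root_.sub_apply] using hC (w i - a)
    · simpa using (tendsto_iff_norm_sub_tendsto_zero.1 hw).const_mul C
  have hdiff : Tendsto (fun i => inner ℝ (v i) (m (w i) φ - m a φ)) U (𝓝 0) := by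
    refine squeeze_zero_norm' (a := fun i => M * ‖m (w i) φ - m a φ‖) ?_ ?_
    · filter_upwards [hM] with i hi
      exact (norm_inner_le_norm _ _).trans (mul_le_mul_of_nonneg_right hi (norm_nonneg _))
    · simpa using hzero.norm.const_mul M
  have hlim := hdiff.add (tendsto_clm_of_tendsto_toWeakSpace hv (innerSL ℝ (m a φ)))
  simpa [inner_sub_right, real_inner_comm] using hlim

lemma perturbedForm_le_of_tendsto (h : IsCompactEnergySpace ι m) {w : β → D} {a : D} {C : ℝ}
    (hC : ∀ᶠ i in U, ‖w i‖ ≤ C)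
    (hw : Tendsto (fun i => toWeakSpace ℝ D (w i)) U (𝓝 (toWeakSpace ℝ D a)))
    {v : β → L} {v₀ : L} {M : ℝ} (hvnonneg : ∀ᶠ i in U, v i ∈ nonnegPotentials m)
    (hM : ∀ᶠ i in U, ‖v i‖ ≤ M)
    (hv : Tendsto (fun i => toWeakSpace ℝ L (v i)) U (𝓝 (toWeakSpace ℝ L v₀)))
    {r : ℝ} (hr : ∀ᶠ i in U, perturbedForm ι m (v i) (w i) ≤ r) :
    perturbedForm ι m v₀ a ≤ r := by
  have hιw := tendsto_of_isCompactOperator h.isCompactOperator hC hw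
  have htangent : ∀ φ ∈ {φ | ∃ C, ∀ w, ‖m w φ‖ ≤ C * ‖ι w‖},
      2 * inner ℝ a a - ‖a‖ ^ 2 - ‖ι a‖ ^ 2 + (2 * inner ℝ v₀ (m a φ) - inner ℝ v₀ (m φ φ)) ≤
        r := by
    intro φ hφ
    have hφφ : Tendsto (fun i => inner ℝ (v i) (m φ φ)) U (𝓝 (inner ℝ v₀ (m φ φ))) := by
      simpa [real_inner_comm] using tendsto_clm_of_tendsto_toWeakSpace hv (innerSL ℝ (m φ φ))
    have haw := tendsto_clm_of_tendsto_toWeakSpace hw (innerSL ℝ a)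
    have hlim := (((haw.const_mul 2).sub_const (‖a‖ ^ 2)).sub (hιw.norm.pow 2)).add
      (((tendsto_inner_mul_of_bounded_mul hιw hM hv hφ).const_mul 2).sub hφφ)
    refine le_of_tendsto hlim ?_
    filter_upwards [hvnonneg, hr] with i hi hri
    exact (tangent_le_perturbedForm h.symm hi a φ (w i)).trans hri
  have hclosed : IsClosed {φ : D | 2 * inner ℝ a a - ‖a‖ ^ 2 - ‖ι a‖ ^ 2 +
      (2 * inner ℝ v₀ (m a φ) - inner ℝ v₀ (m φ φ)) ≤ r} := by
    have : Continuous fun φ => m φ φ := m.continuous.clm_apply continuous_id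
    exact isClosed_le (by fun_prop) continuous_const
  have hdiag := hclosed.closure_subset_iff.2 htangent (h.dense a)
  rw [mem_ofPred_eq, real_inner_self_eq_norm_sq] at hdiag
  rw [perturbedForm]
  linarith

lemma tendsto_toWeakSpace_sum_smul {k : ℕ} {e : β → Fin k → D} {a : Fin k → D}
    (he : ∀ j, Tendsto (fun i => toWeakSpace ℝ D (e i j)) U (𝓝 (toWeakSpace ℝ D (a j))))
    (c : Fin k → ℝ) :
    Tendsto (fun i => toWeakSpace ℝ D (∑ j, c j • e i j)) U
      (𝓝 (toWeakSpace ℝ D (∑ j, c j • a j))) := by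
  simp only [map_sum, map_smul]
  exact tendsto_finsetSum _ fun j _ => (he j).const_smul (c j)

lemma leOnSubspace_of_tendsto [CompleteSpace D] (h : IsCompactEnergySpace ι m) {k : ℕ}
    {v : β → L} {v₀ : L} {M r : ℝ} (hvnonneg : ∀ᶠ i in U, v i ∈ nonnegPotentials m)
    (hM : ∀ᶠ i in U, ‖v i‖ ≤ M)
    (hv : Tendsto (fun i => toWeakSpace ℝ L (v i)) U (𝓝 (toWeakSpace ℝ L v₀)))
    (hle : ∀ᶠ i in U, LeOnSubspace ι (perturbedForm ι m (v i)) k r) :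
    LeOnSubspace ι (perturbedForm ι m v₀) k r := by
  obtain ⟨e, he⟩ := hle.choice
  have hnorm {x : β → D} (hx : ∀ᶠ i in U, x i ∈ Submodule.span ℝ (range (e i)) ∧ ‖ι (x i)‖ = 1) :
      ∀ᶠ i in U, ‖x i‖ ≤ √(r + 1) := by
    filter_upwards [he, hvnonneg, hx] with i hi hvi ⟨hxi, hιxi⟩
    exact Real.le_sqrt_of_sq_le (norm_sq_le_of_perturbedForm_le hvi hιxi (hi.2 _ hxi hιxi))
  choose a ha using fun j => exists_tendsto_toWeakSpace (hnorm (x := fun i => e i j) <| he.mono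
    fun i hi => ⟨Submodule.subset_span (mem_range_self j), hi.1.1 j⟩)
  have hιe (j : Fin k) : Tendsto (fun i => ι (e i j)) U (𝓝 (ι (a j))) :=
    tendsto_of_isCompactOperator h.isCompactOperator (hnorm <| he.mono
      fun i hi => ⟨Submodule.subset_span (mem_range_self j), hi.1.1 j⟩) (ha j)
  have horth : Orthonormal ℝ (ι ∘ a) := orthonormal_iff_ite.2 fun j j' =>
    tendsto_nhds_unique ((hιe j).inner (hιe j')) <| tendsto_const_nhds.congr' <|
      he.mono fun i hi => (orthonormal_iff_ite.1 hi.1 j j').symm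
  refine ⟨a, horth, fun x hx hιx => ?_⟩
  obtain ⟨c, rfl⟩ := (Submodule.mem_span_range_iff_exists_fun ℝ).1 hx
  have hmem : ∀ᶠ i in U, ∑ j, c j • e i j ∈ Submodule.span ℝ (range (e i)) ∧
      ‖ι (∑ j, c j • e i j)‖ = 1 := by
    filter_upwards [he] with i hi
    refine ⟨(Submodule.mem_span_range_iff_exists_fun ℝ).2 ⟨c, rfl⟩, ?_⟩
    rw [← hιx, ← sq_eq_sq₀ (norm_nonneg _) (norm_nonneg _), norm_sq_map_sum_smul hi.1,
      norm_sq_map_sum_smul horth]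
  refine perturbedForm_le_of_tendsto h (hnorm hmem) (tendsto_toWeakSpace_sum_smul ha c)
    hvnonneg hM hv ?_
  filter_upwards [he, hmem] with i hi hxi
  exact hi.2 _ hxi.1 hxi.2

end PerturbedForm

section GapMinimizer

variable {D L : Type*} [NormedAddCommGroup D] [InnerProductSpace ℝ D]
  [NormedAddCommGroup L] [InnerProductSpace ℝ L]
  {ι : D →L[ℝ] L} {m : D →L[ℝ] D →L[ℝ] L} {S : Set L}

lemma upperSemicontinuousOn_minmaxValue_one (hι : ∀ w, ‖ι w‖ ≤ ‖w‖) (hS : S ⊆ nonnegPotentials m) :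
    UpperSemicontinuousOn
      (fun v => minmaxValue ι (perturbedForm ι m ((toWeakSpace ℝ L).symm v)) 1)
      (toWeakSpace ℝ L '' S) := by
  rintro _ ⟨v₀, -, rfl⟩ y hy
  by_cases hex : ∃ w : Fin 1 → D, LinearIndependent ℝ (ι ∘ w)
  swap
  · simp only [minmaxValue_eq_zero hex] at hy ⊢
    exact Eventually.of_forall fun _ => hy
  obtain ⟨z, hz, hzy⟩ := exists_between hy
  obtain ⟨e, he, hle⟩ := leOnSubspace_of_minmaxValue_lt (continuous_perturbedForm v₀) hex hz
  have hunit : ‖ι (e 0)‖ = 1 := he.1 0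
  have hlt : perturbedForm ι m v₀ (e 0) < y :=
    (hle _ (Submodule.subset_span (mem_range_self 0)) hunit).trans_lt hzy
  have hcont : Continuous fun v : WeakSpace ℝ L =>
      perturbedForm ι m ((toWeakSpace ℝ L).symm v) (e 0) := by
    have heval := WeakBilin.eval_continuous (topDualPairing ℝ L).flip (innerSL ℝ (m (e 0) (e 0)))
    exact continuous_const.add (heval.congr fun _ => real_inner_comm _ _)
  filter_upwards [self_mem_nhdsWithin,
    nhdsWithin_le_nhds (hcont.tendsto _ |>.eventually_lt_const hlt)] with _ ⟨v, hv, hvv⟩ hvy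
  subst hvv
  exact (minmaxValue_le (perturbedForm_nonneg hι (hS hv)) (perturbedForm_nonneg hι (hS hv) _)
    (leOnSubspace_one_of_norm_eq_one (perturbedForm_neg v) hunit)).trans_lt hvy

lemma lowerSemicontinuousOn_minmaxValue [CompleteSpace D] (h : IsCompactEnergySpace ι m)
    (hS : S ⊆ nonnegPotentials m) (hbdd : Bornology.IsBounded S) (k : ℕ) :
    LowerSemicontinuousOn
      (fun v => minmaxValue ι (perturbedForm ι m ((toWeakSpace ℝ L).symm v)) k)
      (toWeakSpace ℝ L '' S) := by
  rintro _ ⟨v₀, hv₀, rfl⟩ y hy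
  refine mem_iff_ultrafilter.2 fun U hU => by_contra fun hnot => ?_
  have hweak : Tendsto (fun v => toWeakSpace ℝ L ((toWeakSpace ℝ L).symm v)) U
      (𝓝 (toWeakSpace ℝ L v₀)) := hU.trans nhdsWithin_le_nhds
  have hUS : ∀ᶠ v in U, (toWeakSpace ℝ L).symm v ∈ S :=
    Eventually.mono (hU self_mem_nhdsWithin) fun _ ⟨_, hv, hvv⟩ => hvv ▸ hv
  have hUy : ∀ᶠ v in U, minmaxValue ι (perturbedForm ι m ((toWeakSpace ℝ L).symm v)) k ≤ y :=
    (Ultrafilter.eventually_not.2 hnot).mono fun _ => le_of_not_gt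
  have hy0 : 0 ≤ y := by
    obtain ⟨v, hv, hvy⟩ := (hUS.and hUy).exists
    exact (minmaxValue_nonneg (perturbedForm_nonneg h.norm_le (hS hv))).trans hvy
  have hex : ∃ w : Fin k → D, LinearIndependent ℝ (ι ∘ w) := by
    by_contra hex
    exact hy0.not_gt (hy.trans_eq (minmaxValue_eq_zero hex))
  obtain ⟨M, hM⟩ := hbdd.exists_norm_le
  obtain ⟨z, hyz, hz⟩ := exists_between hy
  have hle : ∀ᶠ v in U, LeOnSubspace ι (perturbedForm ι m ((toWeakSpace ℝ L).symm v)) k z :=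
    hUy.mono fun v hv => leOnSubspace_of_minmaxValue_lt (continuous_perturbedForm _) hex
      (hv.trans_lt hyz)
  have hle₀ := leOnSubspace_of_tendsto h (hUS.mono fun _ hv => hS hv) (hUS.mono fun _ => hM _)
    hweak hle
  exact hz.not_ge (minmaxValue_le (perturbedForm_nonneg h.norm_le (hS hv₀)) (hy0.trans hyz.le) hle₀)

theorem exists_forall_gap_le [CompleteSpace D] [CompleteSpace L] (h : IsCompactEnergySpace ι m)
    (hS : S ⊆ nonnegPotentials m) (hconvex : Convex ℝ S) (hclosed : IsClosed S)
    (hbdd : Bornology.IsBounded S) (hne : S.Nonempty) :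
    ∃ v₀ ∈ S, ∀ v ∈ S,
      minmaxValue ι (perturbedForm ι m v₀) 2 - minmaxValue ι (perturbedForm ι m v₀) 1 ≤
        minmaxValue ι (perturbedForm ι m v) 2 - minmaxValue ι (perturbedForm ι m v) 1 := by
  have hlsc := (lowerSemicontinuousOn_minmaxValue h hS hbdd 2).add
    ((upperSemicontinuousOn_minmaxValue_one h.norm_le hS).neg)
  obtain ⟨_, ⟨v₀, hv₀, rfl⟩, hmin⟩ :=
    hlsc.exists_isMinOn (hne.image _) (isCompact_toWeakSpace_image hconvex hclosed hbdd)
  exact ⟨v₀, hv₀, fun v hv => by simpa [sub_eq_add_neg] using hmin (mem_image_of_mem _ hv)⟩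

end GapMinimizer

section FiniteMeasure

variable {X : Type*} [MeasurableSpace X] {u A : X → ℝ}

lemma integral_prod_sub_sq {ν : Measure X} [IsFiniteMeasure ν] (hu : MemLp u 2 ν) :
    ∫ z, (u z.1 - u z.2) ^ 2 ∂ν.prod ν =
      2 * (ν.real univ * ∫ p, u p ^ 2 ∂ν - (∫ p, u p ∂ν) ^ 2) := by
  have hu₁ : Integrable u ν := hu.integrable one_le_two
  have hfst := hu.integrable_sq.comp_fst ν
  have hsnd := hu.integrable_sq.comp_snd ν
  have hadd : Integrable (fun z : X × X => u z.1 ^ 2 + u z.2 ^ 2) (ν.prod ν) := hfst.add hsnd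
  have hmul := (hu₁.mul_prod hu₁).const_mul 2
  simp_rw [show ∀ z : X × X, (u z.1 - u z.2) ^ 2 =
    u z.1 ^ 2 + u z.2 ^ 2 - 2 * (u z.1 * u z.2) from fun z => by ring]
  rw [integral_sub hadd hmul, integral_add hfst hsnd, integral_const_mul,
    integral_prod_mul, integral_fun_fst (fun p => u p ^ 2), integral_fun_snd (fun p => u p ^ 2)]
  simp only [smul_eq_mul]
  ring

lemma sq_integral_le {ν : Measure X} [IsFiniteMeasure ν] (hu : MemLp u 2 ν) :
    (∫ p, u p ∂ν) ^ 2 ≤ ν.real univ * ∫ p, u p ^ 2 ∂ν := by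
  have h : 0 ≤ ∫ z, (u z.1 - u z.2) ^ 2 ∂ν.prod ν := integral_nonneg fun _ => sq_nonneg _
  rw [integral_prod_sub_sq hu] at h
  linarith

lemma setIntegral_eq_sum_fiber {μ : Measure X} {κ : Type*} [MeasurableSpace κ]
    [MeasurableSingletonClass κ] {s : Set X} (hs : MeasurableSet s) {g : X → κ}
    (hg : Measurable g) {K : Finset κ} (hK : ∀ p ∈ s, g p ∈ K) {f : X → ℝ} (hf : Integrable f μ) :
    ∫ p in s, f p ∂μ = ∑ k ∈ K, ∫ p in s ∩ g ⁻¹' {k}, f p ∂μ := by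
  rw [← integral_biUnion_finset _ (fun k _ => hs.inter (hg (measurableSet_singleton k)))
    (fun k _ l _ hkl => disjoint_left.2 fun p hk hl => hkl (hk.2.symm.trans hl.2))
    fun k _ => hf.integrableOn, ← inter_iUnion₂]
  congr 2
  exact (inter_eq_left.2 fun p hp => mem_iUnion₂.2 ⟨g p, hK p hp, rfl⟩).symm

variable {μ : Measure X} [IsFiniteMeasure μ]

lemma setIntegral_sq_le_of_sub_sq_le {Q : Set X} (hQ : MeasurableSet Q) (hu : MemLp u 2 μ)
    (hA : Integrable A μ) (h : ∀ p ∈ Q, ∀ q ∈ Q, (u p - u q) ^ 2 ≤ A p + A q) :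
    ∫ p in Q, u p ^ 2 ∂μ ≤ (μ.real Q)⁻¹ * (∫ p in Q, u p ∂μ) ^ 2 + ∫ p in Q, A p ∂μ := by
  set ν := μ.restrict Q
  have hνQ : ν.real univ = μ.real Q := by simp [ν]
  have hAν : Integrable A ν := hA.integrableOn
  have hvar : ∫ z, (u z.1 - u z.2) ^ 2 ∂ν.prod ν ≤ ∫ z, A z.1 + A z.2 ∂ν.prod ν := by
    refine integral_mono_of_nonneg (.of_forall fun _ => sq_nonneg _)
      ((hAν.comp_fst ν).add (hAν.comp_snd ν)) ?_
    rw [Measure.prod_restrict]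
    filter_upwards [ae_restrict_mem (hQ.prod hQ)] with z hz using h _ hz.1 _ hz.2
  rw [integral_prod_sub_sq (hu.restrict Q), integral_add (hAν.comp_fst ν) (hAν.comp_snd ν),
    integral_fun_fst, integral_fun_snd, smul_eq_mul, hνQ] at hvar
  rcases (measureReal_nonneg (μ := μ) (s := Q)).eq_or_lt with hzero | hpos
  · have hν : ν = 0 := Measure.restrict_eq_zero.2 <|
      (measureReal_eq_zero_iff (measure_ne_top _ _)).1 hzero.symm
    simp [hν]
  · rw [← mul_le_mul_iff_right₀ hpos, mul_add, mul_inv_cancel_left₀ hpos.ne']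
    linarith

lemma setIntegral_sq_le_sum_fiber {κ : Type*} [MeasurableSpace κ] [MeasurableSingletonClass κ]
    {s : Set X} (hs : MeasurableSet s) {g : X → κ} (hg : Measurable g) {K : Finset κ}
    (hK : ∀ p ∈ s, g p ∈ K) (hu : MemLp u 2 μ) (hA : Integrable A μ)
    (h : ∀ p ∈ s, ∀ q ∈ s, g p = g q → (u p - u q) ^ 2 ≤ A p + A q) :
    ∫ p in s, u p ^ 2 ∂μ ≤
      ∑ k ∈ K, (μ.real (s ∩ g ⁻¹' {k}))⁻¹ * (∫ p in s ∩ g ⁻¹' {k}, u p ∂μ) ^ 2 +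
        ∫ p in s, A p ∂μ := by
  rw [setIntegral_eq_sum_fiber hs hg hK hu.integrable_sq, setIntegral_eq_sum_fiber hs hg hK hA,
    ← Finset.sum_add_distrib]
  exact Finset.sum_le_sum fun k _ => setIntegral_sq_le_of_sub_sq_le
    (hs.inter (hg (measurableSet_singleton k))) hu hA
    fun p hp q hq => h p hp.1 q hq.1 (hp.2.trans hq.2.symm)

end FiniteMeasure

section UnitSquare

/-- Lebesgue measure on the unit interval. -/
abbrev intervalMeasure : Measure ℝ := volume.restrict (Ioo 0 1)

/-- Lebesgue measure on the unit square `Omega`. -/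
abbrev squareMeasure : Measure (ℝ × ℝ) := volume.restrict Omega

instance : IsProbabilityMeasure intervalMeasure := ⟨by simp⟩

lemma squareMeasure_eq_prod : squareMeasure = intervalMeasure.prod intervalMeasure := by
  rw [squareMeasure, intervalMeasure, Measure.prod_restrict, Omega]
  rfl

instance : IsProbabilityMeasure squareMeasure := by
  rw [squareMeasure_eq_prod]
  infer_instance

lemma measurableSet_Omega : MeasurableSet Omega := measurableSet_Ioo.prod measurableSet_Ioo

lemma memLp_squareMeasure {f : ℝ × ℝ → ℝ} (hf : Continuous f) (r : ℝ≥0∞) :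
    MemLp f r squareMeasure := by
  obtain ⟨C, hC⟩ := ((isCompact_Icc (a := (0 : ℝ)) (b := 1)).prod
    (isCompact_Icc (a := (0 : ℝ)) (b := 1))).exists_bound_of_continuousOn hf.continuousOn
  refine MemLp.of_bound hf.aestronglyMeasurable C ?_
  filter_upwards [ae_restrict_mem measurableSet_Omega] with p hp
  exact hC p ⟨Ioo_subset_Icc_self hp.1, Ioo_subset_Icc_self hp.2⟩

lemma integrable_squareMeasure {f : ℝ × ℝ → ℝ} (hf : Continuous f) :
    Integrable f squareMeasure :=
  memLp_one_iff_integrable.1 (memLp_squareMeasure hf 1)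

lemma intervalIntegral_eq_integral_intervalMeasure (f : ℝ → ℝ) :
    ∫ s in 0..1, f s = ∫ s, f s ∂intervalMeasure := by
  rw [intervalIntegral.integral_of_le zero_le_one, integral_Ioc_eq_integral_Ioo]

lemma integral_squareMeasure_comp_swap (f : ℝ × ℝ → ℝ) :
    ∫ p, f p.swap ∂squareMeasure = ∫ p, f p ∂squareMeasure := by
  rw [squareMeasure_eq_prod, integral_prod_swap]

lemma squareMeasure_real_compl_Ico_prod_le {δ : ℝ} (hδ : 0 ≤ δ) :
    squareMeasure.real (Ico δ 1 ×ˢ Ico δ 1)ᶜ ≤ 2 * δ := by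
  have hIco : intervalMeasure.real (Ico δ 1)ᶜ ≤ δ := by
    rw [measureReal_restrict_apply measurableSet_Ico.compl]
    refine (measureReal_mono (s₂ := Ioo 0 δ) (fun x hx => ⟨hx.2.1, ?_⟩) (by simp)).trans ?_
    · exact lt_of_not_ge fun hδx => hx.1 ⟨hδx, hx.2.2⟩
    · simp [Real.volume_real_Ioo_of_le hδ]
  rw [compl_prod_eq_union, squareMeasure_eq_prod]
  refine (measureReal_union_le _ _).trans ?_
  simp only [measureReal_prod_prod, probReal_univ, mul_one, one_mul]
  linarith

lemma sq_sub_le_abs_mul_integral_sq {ψ ψ' : ℝ → ℝ} (hψ : ∀ s, HasDerivAt ψ (ψ' s) s)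
    (hψ' : Continuous ψ') {x x' : ℝ} (hx : x ∈ Icc (0 : ℝ) 1) (hx' : x' ∈ Icc (0 : ℝ) 1) :
    (ψ x - ψ x') ^ 2 ≤ |x - x'| * ∫ s in 0..1, ψ' s ^ 2 := by
  wlog hle : x' ≤ x generalizing x x'
  · rw [← neg_sub, neg_sq, abs_sub_comm]
    exact this hx' hx (le_of_not_ge hle)
  have hcs := sq_integral_le (ν := volume.restrict (Ioc x' x)) <|
    (memLp_two_iff_integrable_sq hψ'.aestronglyMeasurable).2 (hψ'.pow 2).integrableOn_Ioc
  rw [← intervalIntegral.integral_of_le hle, ← intervalIntegral.integral_of_le hle,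
    intervalIntegral.integral_eq_sub_of_hasDerivAt (fun s _ => hψ s) (hψ'.intervalIntegrable _ _),
    measureReal_restrict_apply_univ, Real.volume_real_Ioc_of_le hle] at hcs
  rw [abs_of_nonneg (sub_nonneg.2 hle)]
  refine hcs.trans (mul_le_mul_of_nonneg_left ?_ (sub_nonneg.2 hle))
  exact intervalIntegral.integral_mono_interval hx'.1 hle hx.2 (.of_forall fun _ => sq_nonneg _)
    ((hψ'.pow 2).intervalIntegrable _ _)

end UnitSquare

section TestFunctions

variable {φ : ℝ × ℝ → ℝ} {α α₁ α₂ : ℝ}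

lemma IsTest.comp_swap (hφ : IsTest φ) : IsTest (φ ∘ Prod.swap) := by
  refine ⟨hφ.1.comp (contDiff_snd.prodMk contDiff_fst),
    hφ.2.1.comp_homeomorph (Homeomorph.prodComm ℝ ℝ), ?_⟩
  have htsupport := tsupport_comp_eq_preimage φ (Homeomorph.prodComm ℝ ℝ)
  rw [Homeomorph.coe_prodComm] at htsupport
  exact fun p hp => (hφ.2.2 (htsupport.subset hp)).symm

lemma pdx_comp_swap (φ : ℝ × ℝ → ℝ) (p : ℝ × ℝ) : pdx (φ ∘ Prod.swap) p = pdy φ p.swap :=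
  DFunLike.congr_fun
    ((ContinuousLinearEquiv.prodComm ℝ ℝ ℝ).comp_right_fderiv (f := φ) (x := p)) (1, 0)

lemma IsTest.continuous (hφ : IsTest φ) : Continuous φ := hφ.1.continuous

lemma IsTest.differentiable (hφ : IsTest φ) : Differentiable ℝ φ := hφ.1.differentiable (by simp)

lemma IsTest.continuous_fderiv_apply (hφ : IsTest φ) (v : ℝ × ℝ) :
    Continuous fun p => fderiv ℝ φ p v :=
  (hφ.1.continuous_fderiv (by simp)).clm_apply continuous_const

lemma IsTest.continuous_pdx (hφ : IsTest φ) : Continuous (pdx φ) := hφ.continuous_fderiv_apply _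

lemma IsTest.continuous_pdy (hφ : IsTest φ) : Continuous (pdy φ) := hφ.continuous_fderiv_apply _

lemma IsTest.hasDerivAt_pdx (hφ : IsTest φ) (x y : ℝ) :
    HasDerivAt (fun s => φ (s, y)) (pdx φ (x, y)) x :=
  (hφ.differentiable (x, y)).hasFDerivAt.comp_hasDerivAt x
    ((hasDerivAt_id x).prodMk (hasDerivAt_const x y))

lemma IsTest.eq_zero_of_notMem (hφ : IsTest φ) {p : ℝ × ℝ} (hp : p ∉ Omega) : φ p = 0 :=
  image_eq_zero_of_notMem_tsupport fun h => hp (hφ.2.2 h)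

/-- The weighted energy of `φ` on the horizontal slice at height `y`. Vertical slices are
horizontal slices of `φ ∘ Prod.swap`. -/
def sliceEnergy (α : ℝ) (φ : ℝ × ℝ → ℝ) (y : ℝ) : ℝ := (y ^ α) ^ 2 * ∫ s in 0..1, pdx φ (s, y) ^ 2

/-- The energy `‖y ^ α₁ ∂ₓφ‖² + ‖x ^ α₂ ∂_yφ‖²` of a smooth function `φ`. -/
def dirichletEnergy (α₁ α₂ : ℝ) (φ : ℝ × ℝ → ℝ) : ℝ :=
  ∫ p, (p.2 ^ α₁ * pdx φ p) ^ 2 ∂squareMeasure + ∫ p, (p.1 ^ α₂ * pdy φ p) ^ 2 ∂squareMeasure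

lemma sliceEnergy_nonneg (α : ℝ) (φ : ℝ × ℝ → ℝ) (y : ℝ) : 0 ≤ sliceEnergy α φ y :=
  mul_nonneg (sq_nonneg _)
    (intervalIntegral.integral_nonneg zero_le_one fun _ _ => sq_nonneg _)

lemma dirichletEnergy_nonneg (α₁ α₂ : ℝ) (φ : ℝ × ℝ → ℝ) : 0 ≤ dirichletEnergy α₁ α₂ φ :=
  add_nonneg (integral_nonneg fun _ => sq_nonneg _) (integral_nonneg fun _ => sq_nonneg _)

lemma IsTest.continuous_sliceEnergy (hφ : IsTest φ) (hα : 0 ≤ α) :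
    Continuous (sliceEnergy α φ) := by
  have hpdx := hφ.continuous_pdx
  have hslice : Continuous fun y => ∫ s in (0 : ℝ)..1, pdx φ (s, y) ^ 2 :=
    intervalIntegral.continuous_parametric_intervalIntegral_of_continuous' (by fun_prop) _ _
  exact ((Real.continuous_rpow_const hα).pow 2).mul hslice

lemma IsTest.integral_sliceEnergy (hφ : IsTest φ) (hα : 0 ≤ α) :
    ∫ y, sliceEnergy α φ y ∂intervalMeasure = ∫ p, (p.2 ^ α * pdx φ p) ^ 2 ∂squareMeasure := by
  have hint : Integrable (fun p : ℝ × ℝ => (p.2 ^ α * pdx φ p) ^ 2) squareMeasure :=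
    integrable_squareMeasure
      ((((Real.continuous_rpow_const hα).comp continuous_snd).mul hφ.continuous_pdx).pow 2)
  rw [squareMeasure_eq_prod] at hint ⊢
  rw [integral_prod_symm _ hint]
  simp only [sliceEnergy, mul_pow, integral_const_mul, intervalIntegral_eq_integral_intervalMeasure]

lemma IsTest.integral_sliceEnergy_comp_swap (hφ : IsTest φ) (hα : 0 ≤ α) :
    ∫ x, sliceEnergy α (φ ∘ Prod.swap) x ∂intervalMeasure =
      ∫ p, (p.1 ^ α * pdy φ p) ^ 2 ∂squareMeasure := by
  simp only [hφ.comp_swap.integral_sliceEnergy hα, pdx_comp_swap]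
  exact integral_squareMeasure_comp_swap fun p => (p.1 ^ α * pdy φ p) ^ 2

lemma IsTest.integral_sliceEnergy_add (hφ : IsTest φ) (hα₁ : 0 ≤ α₁) (hα₂ : 0 ≤ α₂) :
    ∫ p, (sliceEnergy α₁ φ p.2 + sliceEnergy α₂ (φ ∘ Prod.swap) p.1) ∂squareMeasure =
      dirichletEnergy α₁ α₂ φ := by
  have hsnd : Integrable (fun p : ℝ × ℝ => sliceEnergy α₁ φ p.2) squareMeasure :=
    integrable_squareMeasure ((hφ.continuous_sliceEnergy hα₁).comp continuous_snd)
  have hfst : Integrable (fun p : ℝ × ℝ => sliceEnergy α₂ (φ ∘ Prod.swap) p.1) squareMeasure :=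
    integrable_squareMeasure ((hφ.comp_swap.continuous_sliceEnergy hα₂).comp continuous_fst)
  rw [integral_add hsnd hfst, dirichletEnergy, ← hφ.integral_sliceEnergy hα₁,
    ← hφ.integral_sliceEnergy_comp_swap hα₂, squareMeasure_eq_prod, integral_fun_fst,
    integral_fun_snd]
  simp

lemma le_sq_rpow {y : ℝ} (hα : α ≤ 1 / 2) (hy : y ∈ Ioo (0 : ℝ) 1) : y ≤ (y ^ α) ^ 2 := by
  rw [← Real.rpow_mul_natCast hy.1.le]
  simpa using Real.rpow_le_rpow_of_exponent_ge hy.1 hy.2.le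
    (show α * (2 : ℕ) ≤ 1 by push_cast; linarith)

lemma IsTest.mul_sq_sub_le (hφ : IsTest φ) (hα : α ≤ 1 / 2) {x x' y : ℝ}
    (hx : x ∈ Icc (0 : ℝ) 1) (hx' : x' ∈ Icc (0 : ℝ) 1) (hy : y ∈ Ioo (0 : ℝ) 1) :
    y * (φ (x, y) - φ (x', y)) ^ 2 ≤ |x - x'| * sliceEnergy α φ y := by
  have hdiff := sq_sub_le_abs_mul_integral_sq (fun s => hφ.hasDerivAt_pdx s y)
    (hφ.continuous_pdx.comp (.prodMk_left y)) hx hx'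
  calc y * (φ (x, y) - φ (x', y)) ^ 2
      ≤ (y ^ α) ^ 2 * (|x - x'| * ∫ s in 0..1, pdx φ (s, y) ^ 2) := by
        gcongr
        exact le_sq_rpow hα hy
    _ = |x - x'| * sliceEnergy α φ y := mul_left_comm _ _ _

lemma IsTest.mul_sq_le (hφ : IsTest φ) (hα : α ≤ 1 / 2) {p : ℝ × ℝ} (hp : p ∈ Omega) :
    p.2 * φ p ^ 2 ≤ p.1 * sliceEnergy α φ p.2 := by
  have hboundary : φ (0, p.2) = 0 := hφ.eq_zero_of_notMem (by simp [Omega])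
  simpa [hboundary, abs_of_pos hp.1.1] using
    hφ.mul_sq_sub_le hα (Ioo_subset_Icc_self hp.1) (left_mem_Icc.2 zero_le_one) hp.2

lemma IsTest.pow_four_le (hφ : IsTest φ) (hα₁ : α₁ ≤ 1 / 2) (hα₂ : α₂ ≤ 1 / 2) {p : ℝ × ℝ}
    (hp : p ∈ Omega) :
    φ p ^ 4 ≤ sliceEnergy α₂ (φ ∘ Prod.swap) p.1 * sliceEnergy α₁ φ p.2 := by
  have hhorizontal := hφ.mul_sq_le hα₁ hp
  have hvertical : p.1 * φ p ^ 2 ≤ p.2 * sliceEnergy α₂ (φ ∘ Prod.swap) p.1 :=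
    hφ.comp_swap.mul_sq_le hα₂ (p := p.swap) hp.symm
  have hxy : 0 < p.1 * p.2 := mul_pos hp.1.1 hp.2.1
  refine le_of_mul_le_mul_left ?_ hxy
  calc p.1 * p.2 * φ p ^ 4
      = p.1 * φ p ^ 2 * (p.2 * φ p ^ 2) := by ring
    _ ≤ p.2 * sliceEnergy α₂ (φ ∘ Prod.swap) p.1 * (p.1 * sliceEnergy α₁ φ p.2) :=
        mul_le_mul hvertical hhorizontal (mul_nonneg hp.2.1.le (sq_nonneg _))
          (mul_nonneg hp.2.1.le (sliceEnergy_nonneg _ _ _))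
    _ = p.1 * p.2 * (sliceEnergy α₂ (φ ∘ Prod.swap) p.1 * sliceEnergy α₁ φ p.2) := by ring

lemma IsTest.integral_pow_four_le (hφ : IsTest φ) (hα₁ : α₁ ∈ Icc 0 (1 / 2))
    (hα₂ : α₂ ∈ Icc 0 (1 / 2)) :
    ∫ p, φ p ^ 4 ∂squareMeasure ≤ dirichletEnergy α₁ α₂ φ ^ 2 := by
  have hcont : Continuous fun p : ℝ × ℝ =>
      sliceEnergy α₂ (φ ∘ Prod.swap) p.1 * sliceEnergy α₁ φ p.2 :=
    ((hφ.comp_swap.continuous_sliceEnergy hα₂.1).comp continuous_fst).mul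
      ((hφ.continuous_sliceEnergy hα₁.1).comp continuous_snd)
  set EX := ∫ p, (p.2 ^ α₁ * pdx φ p) ^ 2 ∂squareMeasure
  set EY := ∫ p, (p.1 ^ α₂ * pdy φ p) ^ 2 ∂squareMeasure
  have hEX : 0 ≤ EX := integral_nonneg fun _ => sq_nonneg _
  have hEY : 0 ≤ EY := integral_nonneg fun _ => sq_nonneg _
  calc ∫ p, φ p ^ 4 ∂squareMeasure
      ≤ ∫ p, sliceEnergy α₂ (φ ∘ Prod.swap) p.1 * sliceEnergy α₁ φ p.2 ∂squareMeasure := by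
        refine integral_mono_ae (integrable_squareMeasure (hφ.continuous.pow 4))
          (integrable_squareMeasure hcont) ?_
        filter_upwards [ae_restrict_mem measurableSet_Omega] with p hp
        exact hφ.pow_four_le hα₁.2 hα₂.2 hp
    _ = EY * EX := by
        rw [squareMeasure_eq_prod, integral_prod_mul, hφ.integral_sliceEnergy hα₁.1,
          hφ.integral_sliceEnergy_comp_swap hα₂.1]
    _ ≤ dirichletEnergy α₁ α₂ φ ^ 2 := by
        rw [dirichletEnergy]
        nlinarith

lemma IsTest.setIntegral_sq_le (hφ : IsTest φ) (hα₁ : α₁ ∈ Icc 0 (1 / 2))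
    (hα₂ : α₂ ∈ Icc 0 (1 / 2)) {A : Set (ℝ × ℝ)} {ε : ℝ} (hε : 0 ≤ ε)
    (hA : squareMeasure.real A ≤ ε ^ 2) :
    ∫ p in A, φ p ^ 2 ∂squareMeasure ≤ ε * dirichletEnergy α₁ α₂ φ := by
  refine le_of_sq_le_sq ?_ (mul_nonneg hε (dirichletEnergy_nonneg _ _ _))
  calc (∫ p in A, φ p ^ 2 ∂squareMeasure) ^ 2
      ≤ squareMeasure.real A * ∫ p in A, φ p ^ 4 ∂squareMeasure := by
        simpa [← pow_mul] using sq_integral_le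
          ((memLp_squareMeasure (hφ.continuous.pow 2) 2).restrict A)
    _ ≤ ε ^ 2 * dirichletEnergy α₁ α₂ φ ^ 2 := by
        refine mul_le_mul hA ?_ (integral_nonneg fun p => ?_) (sq_nonneg ε)
        · exact (setIntegral_le_integral (integrable_squareMeasure (hφ.continuous.pow 4))
            (.of_forall fun p => (by decide : Even 4).pow_nonneg (φ p))).trans
            (hφ.integral_pow_four_le hα₁ hα₂)
        · exact (by decide : Even 4).pow_nonneg (φ p)
    _ = (ε * dirichletEnergy α₁ α₂ φ) ^ 2 := (mul_pow _ _ _).symm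

lemma IsTest.mul_sq_sub_le_of_abs_sub_le (hφ : IsTest φ) (hα₁ : α₁ ≤ 1 / 2) (hα₂ : α₂ ≤ 1 / 2)
    {p q : ℝ × ℝ} (hp : p ∈ Omega) (hq : q ∈ Omega) {δ h : ℝ} (hδ : 0 ≤ δ) (hpδ : δ ≤ p.2)
    (hqδ : δ ≤ q.1) (hfst : |p.1 - q.1| ≤ h) (hsnd : |p.2 - q.2| ≤ h) :
    δ * (φ p - φ q) ^ 2 ≤
      2 * h * (sliceEnergy α₁ φ p.2 + sliceEnergy α₂ (φ ∘ Prod.swap) q.1) := by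
  have hhorizontal : δ * (φ p - φ (q.1, p.2)) ^ 2 ≤ h * sliceEnergy α₁ φ p.2 := by
    refine (mul_le_mul_of_nonneg_right hpδ (sq_nonneg _)).trans <|
      (hφ.mul_sq_sub_le hα₁ (Ioo_subset_Icc_self hp.1) (Ioo_subset_Icc_self hq.1) hp.2).trans ?_
    exact mul_le_mul_of_nonneg_right hfst (sliceEnergy_nonneg _ _ _)
  have hvertical : δ * (φ (q.1, p.2) - φ q) ^ 2 ≤ h * sliceEnergy α₂ (φ ∘ Prod.swap) q.1 := by
    refine (mul_le_mul_of_nonneg_right hqδ (sq_nonneg _)).trans <|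
      (hφ.comp_swap.mul_sq_sub_le hα₂ (Ioo_subset_Icc_self hp.2) (Ioo_subset_Icc_self hq.2)
        hq.1).trans ?_
    exact mul_le_mul_of_nonneg_right hsnd (sliceEnergy_nonneg _ _ _)
  have hparallelogram : 0 ≤ δ * ((φ p - φ (q.1, p.2)) - (φ (q.1, p.2) - φ q)) ^ 2 :=
    mul_nonneg hδ (sq_nonneg _)
  nlinarith

end TestFunctions

section Grid

/-- The index of the cell containing `p` in the grid of mesh `1 / N`. -/
def gridIndex (N : ℕ) (p : ℝ × ℝ) : ℕ × ℕ := (⌊N * p.1⌋₊, ⌊N * p.2⌋₊)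

lemma measurable_gridIndex (N : ℕ) : Measurable (gridIndex N) :=
  (Nat.measurable_floor.comp (measurable_fst.const_mul _)).prodMk
    (Nat.measurable_floor.comp (measurable_snd.const_mul _))

lemma gridIndex_mem {N : ℕ} (hN : 0 < N) {p : ℝ × ℝ} (hp : p ∈ Omega) :
    gridIndex N p ∈ Finset.range N ×ˢ Finset.range N := by
  have hfloor : ∀ x < (1 : ℝ), ⌊N * x⌋₊ < N := fun x hx =>
    (Nat.floor_lt' hN.ne').2 <| mul_lt_of_lt_one_right (Nat.cast_pos.2 hN) hx
  exact Finset.mem_product.2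
    ⟨Finset.mem_range.2 (hfloor _ hp.1.2), Finset.mem_range.2 (hfloor _ hp.2.2)⟩

lemma abs_sub_le_of_floor_mul_eq {N : ℕ} (hN : 0 < N) {x y : ℝ} (hx : 0 ≤ x) (hy : 0 ≤ y)
    (h : ⌊N * x⌋₊ = ⌊N * y⌋₊) : |x - y| ≤ 1 / N := by
  have hN' : (0 : ℝ) < N := Nat.cast_pos.2 hN
  have hx₁ := Nat.floor_le (mul_nonneg hN'.le hx)
  have hx₂ := Nat.lt_floor_add_one (N * x)
  have hy₁ := Nat.floor_le (mul_nonneg hN'.le hy)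
  have hy₂ := Nat.lt_floor_add_one (N * y)
  rw [h] at hx₁ hx₂
  rw [le_div_iff₀ hN', ← abs_of_pos hN', ← abs_mul, abs_le]
  constructor <;> linarith

/-- The part of the grid cell with index `k` at distance at least `δ` from the coordinate axes,
where the weights degenerate. -/
def innerCell (δ : ℝ) (N : ℕ) (k : ℕ × ℕ) : Set (ℝ × ℝ) :=
  Ico δ 1 ×ˢ Ico δ 1 ∩ gridIndex N ⁻¹' {k}

variable {φ : ℝ × ℝ → ℝ} {α₁ α₂ : ℝ}

lemma Ico_prod_subset_Omega {δ : ℝ} (hδ : 0 < δ) : Ico δ 1 ×ˢ Ico δ 1 ⊆ Omega :=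
  prod_mono (Ico_subset_Ioo_left hδ) (Ico_subset_Ioo_left hδ)

lemma IsTest.sq_sub_le_of_gridIndex_eq (hφ : IsTest φ) (hα₁ : α₁ ≤ 1 / 2) (hα₂ : α₂ ≤ 1 / 2)
    {δ : ℝ} (hδ : 0 < δ) {N : ℕ} (hN : 0 < N) {p q : ℝ × ℝ} (hp : p ∈ Ico δ 1 ×ˢ Ico δ 1)
    (hq : q ∈ Ico δ 1 ×ˢ Ico δ 1) (hpq : gridIndex N p = gridIndex N q) :
    (φ p - φ q) ^ 2 ≤
      2 / (N * δ) * (sliceEnergy α₁ φ p.2 + sliceEnergy α₂ (φ ∘ Prod.swap) q.1) := by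
  have hpO := Ico_prod_subset_Omega hδ hp
  have hqO := Ico_prod_subset_Omega hδ hq
  have hle := hφ.mul_sq_sub_le_of_abs_sub_le hα₁ hα₂ hpO hqO hδ.le hp.2.1 hq.1.1
    (abs_sub_le_of_floor_mul_eq hN hpO.1.1.le hqO.1.1.le (congrArg Prod.fst hpq))
    (abs_sub_le_of_floor_mul_eq hN hpO.2.1.le hqO.2.1.le (congrArg Prod.snd hpq))
  rw [← mul_le_mul_iff_right₀ hδ]
  refine hle.trans_eq ?_
  field_simp

lemma IsTest.setIntegral_Ico_prod_sq_le (hφ : IsTest φ) (hα₁ : α₁ ∈ Icc 0 (1 / 2))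
    (hα₂ : α₂ ∈ Icc 0 (1 / 2)) {δ : ℝ} (hδ : 0 < δ) {N : ℕ} (hN : 0 < N) :
    ∫ p in Ico δ 1 ×ˢ Ico δ 1, φ p ^ 2 ∂squareMeasure ≤
      ∑ k ∈ Finset.range N ×ˢ Finset.range N,
        (squareMeasure.real (innerCell δ N k))⁻¹ *
          (∫ p in innerCell δ N k, φ p ∂squareMeasure) ^ 2 +
      2 / (N * δ) * dirichletEnergy α₁ α₂ φ := by
  set energy : ℝ × ℝ → ℝ := fun p =>
    sliceEnergy α₁ φ p.2 + sliceEnergy α₂ (φ ∘ Prod.swap) p.1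
  have henergy : ∀ p, 0 ≤ 2 / (N * δ) * energy p := fun p => mul_nonneg (by positivity) <|
    add_nonneg (sliceEnergy_nonneg _ _ _) (sliceEnergy_nonneg _ _ _)
  have hint : Integrable (fun p => 2 / (N * δ) * energy p) squareMeasure :=
    (integrable_squareMeasure (((hφ.continuous_sliceEnergy hα₁.1).comp continuous_snd).add
      ((hφ.comp_swap.continuous_sliceEnergy hα₂.1).comp continuous_fst))).const_mul _
  have hpair : ∀ p ∈ Ico δ 1 ×ˢ Ico δ 1, ∀ q ∈ Ico δ 1 ×ˢ Ico δ 1, gridIndex N p = gridIndex N q →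
      (φ p - φ q) ^ 2 ≤ 2 / (N * δ) * energy p + 2 / (N * δ) * energy q := by
    intro p hp q hq hpq
    refine (hφ.sq_sub_le_of_gridIndex_eq hα₁.2 hα₂.2 hδ hN hp hq hpq).trans ?_
    rw [← mul_add]
    refine mul_le_mul_of_nonneg_left ?_ (by positivity)
    linarith [sliceEnergy_nonneg α₁ φ q.2, sliceEnergy_nonneg α₂ (φ ∘ Prod.swap) p.1]
  refine (setIntegral_sq_le_sum_fiber (measurableSet_Ico.prod measurableSet_Ico)
    (measurable_gridIndex N) (fun p hp => gridIndex_mem hN (Ico_prod_subset_Omega hδ hp))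
    (memLp_squareMeasure hφ.continuous 2) hint hpair).trans ?_
  refine add_le_add_right ((setIntegral_le_integral hint (.of_forall henergy)).trans_eq ?_) _
  rw [integral_const_mul, hφ.integral_sliceEnergy_add hα₁.1 hα₂.1]

lemma measurableSet_innerCell (δ : ℝ) (N : ℕ) (k : ℕ × ℕ) : MeasurableSet (innerCell δ N k) :=
  (measurableSet_Ico.prod measurableSet_Ico).inter
    (measurable_gridIndex N (measurableSet_singleton k))

lemma exists_integral_sq_le_sum_add (hα₁ : α₁ ∈ Icc 0 (1 / 2)) (hα₂ : α₂ ∈ Icc 0 (1 / 2)) {ε : ℝ}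
    (hε : 0 < ε) : ∃ (κ : Type) (_ : Fintype κ) (Q : κ → Set (ℝ × ℝ)), (∀ k, MeasurableSet (Q k)) ∧
      ∀ φ, IsTest φ → ∫ p, φ p ^ 2 ∂squareMeasure ≤
        ∑ k, (squareMeasure.real (Q k))⁻¹ * (∫ p in Q k, φ p ∂squareMeasure) ^ 2 +
          ε * dirichletEnergy α₁ α₂ φ := by
  obtain ⟨δ, hδ, hδε⟩ : ∃ δ > 0, 2 * δ = (ε / 2) ^ 2 :=
    ⟨(ε / 2) ^ 2 / 2, by positivity, mul_div_cancel₀ _ two_ne_zero⟩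
  obtain ⟨N, hN⟩ := exists_nat_gt (4 / (δ * ε))
  have hN' : (0 : ℝ) < N := lt_trans (by positivity) hN
  have hmesh : 2 / (N * δ) ≤ ε / 2 := by
    rw [div_lt_iff₀ (by positivity)] at hN
    rw [div_le_div_iff₀ (by positivity) two_pos]
    calc 2 * 2 = (4 : ℝ) := by norm_num
      _ ≤ N * (δ * ε) := hN.le
      _ = ε * (N * δ) := by ring
  refine ⟨(Finset.range N ×ˢ Finset.range N : Finset _), inferInstance,
    fun k => innerCell δ N k, fun k => measurableSet_innerCell δ N k, fun φ hφ => ?_⟩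
  have hint : Integrable (fun p => φ p ^ 2) squareMeasure :=
    integrable_squareMeasure (hφ.continuous.pow 2)
  rw [Finset.sum_coe_sort (Finset.range N ×ˢ Finset.range N) fun k =>
      (squareMeasure.real (innerCell δ N k))⁻¹ * (∫ p in innerCell δ N k, φ p ∂squareMeasure) ^ 2,
    ← integral_add_compl (s := Ico δ 1 ×ˢ Ico δ 1) (by measurability) hint]
  have hinterior := hφ.setIntegral_Ico_prod_sq_le hα₁ hα₂ hδ (Nat.cast_pos.1 hN')
  have hboundary := hφ.setIntegral_sq_le hα₁ hα₂ (by positivity)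
    ((squareMeasure_real_compl_Ico_prod_le hδ.le).trans_eq hδε)
  have hmesh' := mul_le_mul_of_nonneg_right hmesh (dirichletEnergy_nonneg α₁ α₂ φ)
  exact (add_le_add (hinterior.trans (add_le_add_right hmesh' _)) hboundary).trans_eq (by ring)

end Grid

section Lp

variable {X : Type*} [MeasurableSpace X] {μ : Measure X} {p q : ℝ≥0∞} {M : ℝ≥0∞}

lemma inner_eq_integral_of_ae_eq {f g : Lp ℝ 2 μ} {u v : X → ℝ} (hf : f =ᵐ[μ] u)
    (hg : g =ᵐ[μ] v) : inner ℝ f g = ∫ x, u x * v x ∂μ := by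
  rw [L2.inner_def]
  refine integral_congr_ae ?_
  filter_upwards [hf, hg] with x hfx hgx
  simp [hfx, hgx, mul_comm]

lemma norm_sq_eq_integral_of_ae_eq {f : Lp ℝ 2 μ} {u : X → ℝ} (hf : f =ᵐ[μ] u) :
    ‖f‖ ^ 2 = ∫ x, u x ^ 2 ∂μ := by
  rw [← real_inner_self_eq_norm_sq, inner_eq_integral_of_ae_eq hf hf]
  simp only [sq]

lemma lowerSemicontinuous_eLpNorm [Fact (1 ≤ p)] (q : ℝ≥0∞) :
    LowerSemicontinuous fun f : Lp ℝ p μ => eLpNorm f q μ := by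
  refine lowerSemicontinuous_iff_isClosed_preimage.2 fun C => IsSeqClosed.isClosed ?_
  intro f g hf hfg
  obtain ⟨ns, -, hae⟩ := (tendstoInMeasure_of_tendsto_Lp hfg).exists_seq_tendsto_ae
  exact Lp.eLpNorm_le_of_ae_tendsto (Eventually.of_forall fun n => hf (ns n))
    (fun n => Lp.aestronglyMeasurable (f (ns n))) hae

/-- The nonnegative elements of `L^p` with `L^q` norm at most `M`. With `p = 2` it encodes the class
`S_q` of potentials inside the Hilbert space `L²`. -/
def nonnegLpBall (μ : Measure X) (p q M : ℝ≥0∞) : Set (Lp ℝ p μ) :=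
  {v | 0 ≤ v ∧ eLpNorm v q μ ≤ M}

lemma zero_mem_nonnegLpBall : 0 ∈ nonnegLpBall μ p q M := by
  refine ⟨le_rfl, ?_⟩
  rw [eLpNorm_congr_ae (Lp.coeFn_zero ℝ p μ), eLpNorm_zero]
  exact zero_le

lemma isClosed_nonnegLpBall [Fact (1 ≤ p)] : IsClosed (nonnegLpBall μ p q M) :=
  (isClosed_Ici (a := (0 : Lp ℝ p μ))).inter
    ((lowerSemicontinuous_eLpNorm (p := p) (μ := μ) q).isClosed_preimage M)

lemma convex_nonnegLpBall (hq : 1 ≤ q) : Convex ℝ (nonnegLpBall μ p q M) := by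
  rintro f ⟨hf, hfM⟩ g ⟨hg, hgM⟩ a b ha hb hab
  have hcoe : (a • f + b • g : Lp ℝ p μ) =ᵐ[μ] a • (f : X → ℝ) + b • (g : X → ℝ) :=
    (Lp.coeFn_add _ _).trans ((Lp.coeFn_smul _ _).add (Lp.coeFn_smul _ _))
  rw [← Lp.coeFn_nonneg] at hf hg
  refine ⟨(Lp.coeFn_nonneg _).1 ?_, ?_⟩
  · filter_upwards [hcoe, hf, hg] with x hx hfx hgx
    rw [hx]
    exact add_nonneg (mul_nonneg ha hfx) (mul_nonneg hb hgx)
  · calc eLpNorm (a • f + b • g : Lp ℝ p μ) q μ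
        ≤ eLpNorm (a • (f : X → ℝ)) q μ + eLpNorm (b • (g : X → ℝ)) q μ := by
          rw [eLpNorm_congr_ae hcoe]
          exact eLpNorm_add_le ((Lp.aestronglyMeasurable f).const_smul a)
            ((Lp.aestronglyMeasurable g).const_smul b) hq
      _ ≤ ENNReal.ofReal a * M + ENNReal.ofReal b * M := by
          rw [eLpNorm_const_smul, eLpNorm_const_smul, Real.enorm_of_nonneg ha,
            Real.enorm_of_nonneg hb]
          gcongr
      _ = M := by
          rw [← add_mul, ← ENNReal.ofReal_add ha hb, hab, ENNReal.ofReal_one, one_mul]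

lemma isBounded_nonnegLpBall [IsProbabilityMeasure μ] [Fact (1 ≤ p)] (hpq : p ≤ q) (hM : M ≠ ∞) :
    Bornology.IsBounded (nonnegLpBall μ p q M) := by
  refine isBounded_iff_forall_norm_le.2 ⟨M.toReal, fun v hv => ?_⟩
  rw [Lp.norm_def]
  exact ENNReal.toReal_mono hM
    ((eLpNorm_le_eLpNorm_of_exponent_le hpq (Lp.aestronglyMeasurable v)).trans hv.2)

variable {E : Type*} [NormedAddCommGroup E] [NormedSpace ℝ E]

lemma exists_clm_ae_eq_of_eLpNorm_le [Fact (1 ≤ p)] [Fact (1 ≤ q)] (T : E →L[ℝ] Lp ℝ p μ) {C : ℝ}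
    (hT : ∀ w, eLpNorm (T w) q μ ≤ ENNReal.ofReal (C * ‖w‖)) :
    ∃ S : E →L[ℝ] Lp ℝ q μ, ∀ w, S w =ᵐ[μ] T w := by
  have hmem (w : E) : MemLp (T w) q μ :=
    ⟨Lp.aestronglyMeasurable _, (hT w).trans_lt ENNReal.ofReal_lt_top⟩
  let S : E →ₗ[ℝ] Lp ℝ q μ :=
    { toFun := fun w => (hmem w).toLp _
      map_add' := fun w w' => by
        rw [← MemLp.toLp_add]
        exact MemLp.toLp_congr _ _ (map_add T w w' ▸ Lp.coeFn_add _ _)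
      map_smul' := fun c w => by
        rw [RingHom.id_apply, ← MemLp.toLp_const_smul]
        exact MemLp.toLp_congr _ _ (map_smul T c w ▸ Lp.coeFn_smul _ _) }
  refine ⟨S.mkContinuous (max C 0) fun w => ?_, fun w => (hmem w).coeFn_toLp⟩
  calc ‖(hmem w).toLp (T w)‖ = (eLpNorm (T w) q μ).toReal := Lp.norm_toLp _ _
    _ ≤ max C 0 * ‖w‖ := ENNReal.toReal_le_of_le_ofReal (by positivity) ((hT w).trans
        (ENNReal.ofReal_le_ofReal (by gcongr; exact le_max_left _ _)))

/-- `m w w'` is the pointwise product of `T w` and `T w'`. This product is an element of `L²` only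
under an integrability assumption on the range of `T`, so it cannot be a definition. -/
def IsPointwiseMul (T : E →L[ℝ] Lp ℝ 2 μ) (m : E →L[ℝ] E →L[ℝ] Lp ℝ 2 μ) : Prop :=
  ∀ w w', m w w' =ᵐ[μ] fun x => T w x * T w' x

lemma exists_isPointwiseMul (T : E →L[ℝ] Lp ℝ 2 μ) {C : ℝ}
    (hT : ∀ w, eLpNorm (T w) 4 μ ≤ ENNReal.ofReal (C * ‖w‖)) : ∃ m, IsPointwiseMul T m := by
  have : Fact ((1 : ℝ≥0∞) ≤ 4) := ⟨by norm_num⟩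
  have : ENNReal.HolderTriple 4 4 2 := ⟨by
    rw [show (4 : ℝ≥0∞) = 2 * 2 by norm_num, ENNReal.mul_inv (by simp) (by simp), ← two_mul,
      ← mul_assoc, ENNReal.mul_inv_cancel (by simp) (by simp), one_mul]⟩
  obtain ⟨S, hS⟩ := exists_clm_ae_eq_of_eLpNorm_le T hT
  refine ⟨((ContinuousLinearMap.mul ℝ ℝ).holderL μ 4 4 2).bilinearComp S S, fun w w' => ?_⟩
  filter_upwards [(ContinuousLinearMap.mul ℝ ℝ).coeFn_holder (r := 2) (S w) (S w'), hS w, hS w']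
    with x hmul hw hw'
  rw [← hw, ← hw']
  exact hmul

end Lp

section EnergySpace

variable {α₁ α₂ : ℝ} {u gx gy u' gx' gy' φ : ℝ × ℝ → ℝ}

/-- The Hilbert space `L²(Ω)³` of triples `(u, y ^ α₁ ∂ₓu, x ^ α₂ ∂_yu)`. -/
abbrev TripleL2 := PiLp 2 fun _ : Fin 3 => Lp ℝ 2 squareMeasure

/-- `w` is the class of the triple `(u, y ^ α₁ gx, x ^ α₂ gy)`; its norm in `L²(Ω)³` is then the
`𝓗¹` norm of `u` with derivatives `gx` and `gy`. -/
structure IsWeightedTriple (α₁ α₂ : ℝ) (w : TripleL2) (u gx gy : ℝ × ℝ → ℝ) : Prop where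
  fst : w 0 =ᵐ[squareMeasure] u
  snd : w 1 =ᵐ[squareMeasure] fun p => p.2 ^ α₁ * gx p
  trd : w 2 =ᵐ[squareMeasure] fun p => p.1 ^ α₂ * gy p

namespace IsWeightedTriple

variable {w w' : TripleL2}

lemma norm_sq (h : IsWeightedTriple α₁ α₂ w u gx gy) :
    ‖w‖ ^ 2 = (∫ p, u p ^ 2 ∂squareMeasure) + (∫ p, (p.2 ^ α₁ * gx p) ^ 2 ∂squareMeasure) +
      ∫ p, (p.1 ^ α₂ * gy p) ^ 2 ∂squareMeasure := by
  rw [PiLp.norm_sq_eq_of_L2, Fin.sum_univ_three, norm_sq_eq_integral_of_ae_eq h.fst,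
    norm_sq_eq_integral_of_ae_eq h.snd, norm_sq_eq_integral_of_ae_eq h.trd]

lemma H1Norm_eq (h : IsWeightedTriple α₁ α₂ w u gx gy) : H1Norm α₁ α₂ u gx gy = ‖w‖ := by
  rw [H1Norm, ← Real.sqrt_sq (norm_nonneg w), h.norm_sq]

lemma add (h : IsWeightedTriple α₁ α₂ w u gx gy) (h' : IsWeightedTriple α₁ α₂ w' u' gx' gy') :
    IsWeightedTriple α₁ α₂ (w + w') (u + u') (gx + gx') (gy + gy') := by
  refine ⟨(Lp.coeFn_add _ _).trans (h.fst.add h'.fst), ?_, ?_⟩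
  · refine ((Lp.coeFn_add _ _).trans (h.snd.add h'.snd)).trans (.of_eq (funext fun p => ?_))
    exact (mul_add _ _ _).symm
  · refine ((Lp.coeFn_add _ _).trans (h.trd.add h'.trd)).trans (.of_eq (funext fun p => ?_))
    exact (mul_add _ _ _).symm

lemma smul (h : IsWeightedTriple α₁ α₂ w u gx gy) (c : ℝ) :
    IsWeightedTriple α₁ α₂ (c • w) (c • u) (c • gx) (c • gy) := by
  refine ⟨(Lp.coeFn_smul _ _).trans (h.fst.const_smul c), ?_, ?_⟩
  · refine ((Lp.coeFn_smul _ _).trans (h.snd.const_smul c)).trans (.of_eq (funext fun p => ?_))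
    exact mul_left_comm _ _ _
  · refine ((Lp.coeFn_smul _ _).trans (h.trd.const_smul c)).trans (.of_eq (funext fun p => ?_))
    exact mul_left_comm _ _ _

lemma sub (h : IsWeightedTriple α₁ α₂ w u gx gy) (h' : IsWeightedTriple α₁ α₂ w' u' gx' gy') :
    IsWeightedTriple α₁ α₂ (w - w') (u - u') (gx - gx') (gy - gy') := by
  simpa only [neg_one_smul, ← sub_eq_add_neg] using h.add (h'.smul (-1))

lemma zero : IsWeightedTriple α₁ α₂ 0 0 0 0 where
  fst := Lp.coeFn_zero ..
  snd := (Lp.coeFn_zero ..).trans (.of_eq (funext fun _ => (mul_zero _).symm))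
  trd := (Lp.coeFn_zero ..).trans (.of_eq (funext fun _ => (mul_zero _).symm))

lemma sum {κ : Type*} {w : κ → TripleL2} {u gx gy : κ → ℝ × ℝ → ℝ} (s : Finset κ)
    (h : ∀ i, IsWeightedTriple α₁ α₂ (w i) (u i) (gx i) (gy i)) :
    IsWeightedTriple α₁ α₂ (∑ i ∈ s, w i) (∑ i ∈ s, u i) (∑ i ∈ s, gx i) (∑ i ∈ s, gy i) := by
  classical
  induction s using Finset.induction_on with
  | empty => exact zero
  | insert i s hi ih =>
    simp only [Finset.sum_insert hi]
    exact (h i).add ih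

lemma sum_smul {κ : Type*} [Fintype κ] {w : κ → TripleL2} {u gx gy : κ → ℝ × ℝ → ℝ}
    (h : ∀ i, IsWeightedTriple α₁ α₂ (w i) (u i) (gx i) (gy i)) (c : κ → ℝ) :
    IsWeightedTriple α₁ α₂ (∑ i, c i • w i) (fun p => ∑ i, c i * u i p)
      (fun p => ∑ i, c i * gx i p) (fun p => ∑ i, c i * gy i p) := by
  have happly (f : κ → ℝ × ℝ → ℝ) : ∑ i, c i • f i = fun p => ∑ i, c i * f i p := by
    ext p
    simp only [Finset.sum_apply, Pi.smul_apply, smul_eq_mul]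
  simpa only [happly] using sum Finset.univ fun i => (h i).smul (c i)

end IsWeightedTriple

lemma exists_isWeightedTriple (h : MemLp u 2 squareMeasure)
    (hx : MemLp (fun p => p.2 ^ α₁ * gx p) 2 squareMeasure)
    (hy : MemLp (fun p => p.1 ^ α₂ * gy p) 2 squareMeasure) :
    ∃ w, IsWeightedTriple α₁ α₂ w u gx gy :=
  ⟨WithLp.toLp 2 ![h.toLp _, hx.toLp _, hy.toLp _], h.coeFn_toLp, hx.coeFn_toLp, hy.coeFn_toLp⟩

lemma IsTest.exists_isWeightedTriple (hφ : IsTest φ) (hα₁ : 0 ≤ α₁) (hα₂ : 0 ≤ α₂) :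
    ∃ w, IsWeightedTriple α₁ α₂ w φ (pdx φ) (pdy φ) := by
  have hx := ((Real.continuous_rpow_const hα₁).comp continuous_snd).mul hφ.continuous_pdx
  have hy := ((Real.continuous_rpow_const hα₂).comp continuous_fst).mul hφ.continuous_pdy
  exact _root_.exists_isWeightedTriple (memLp_squareMeasure hφ.continuous _)
    (memLp_squareMeasure hx _) (memLp_squareMeasure hy _)

lemma IsWeightedTriple.norm_sq_eq_add_dirichletEnergy {w : TripleL2}
    (hw : IsWeightedTriple α₁ α₂ w φ (pdx φ) (pdy φ)) :
    ‖w‖ ^ 2 = ∫ p, φ p ^ 2 ∂squareMeasure + dirichletEnergy α₁ α₂ φ := by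
  rw [hw.norm_sq, dirichletEnergy, add_assoc]

/-- The triples of test functions. -/
def testTriples (α₁ α₂ : ℝ) : Submodule ℝ TripleL2 where
  carrier := {w | ∃ φ, IsTest φ ∧ IsWeightedTriple α₁ α₂ w φ (pdx φ) (pdy φ)}
  add_mem' := by
    rintro w w' ⟨φ, hφ, hw⟩ ⟨ψ, hψ, hw'⟩
    have hfderiv (p : ℝ × ℝ) := fderiv_add (hφ.differentiable p) (hψ.differentiable p)
    have hx : pdx (φ + ψ) = pdx φ + pdx ψ := funext fun p => by simp [pdx, hfderiv]
    have hy : pdy (φ + ψ) = pdy φ + pdy ψ := funext fun p => by simp [pdy, hfderiv]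
    exact ⟨φ + ψ, ⟨hφ.1.add hψ.1, hφ.2.1.add hψ.2.1,
      (tsupport_add φ ψ).trans (union_subset hφ.2.2 hψ.2.2)⟩, hx ▸ hy ▸ hw.add hw'⟩
  zero_mem' := by
    have hx : pdx 0 = 0 := funext fun p => by simp [pdx]
    have hy : pdy 0 = 0 := funext fun p => by simp [pdy]
    exact ⟨0, ⟨contDiff_const, HasCompactSupport.zero, by simp⟩, hx.symm ▸ hy.symm ▸ .zero⟩
  smul_mem' := by
    rintro c w ⟨φ, hφ, hw⟩
    have hfderiv (p : ℝ × ℝ) := fderiv_const_smul (hφ.differentiable p) c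
    have hx : pdx (c • φ) = c • pdx φ := funext fun p => by simp [pdx, hfderiv]
    have hy : pdy (c • φ) = c • pdy φ := funext fun p => by simp [pdy, hfderiv]
    exact ⟨c • φ, ⟨hφ.1.const_smul c, hφ.2.1.smul_left (f := fun _ => c),
      (tsupport_smul_subset_right (fun _ => c) φ).trans hφ.2.2⟩, hx ▸ hy ▸ hw.smul c⟩

/-- The Hilbert space `𝓗₀¹(Ω)`, realized as the closure in `L²(Ω)³` of the triples of test
functions. -/
abbrev EnergySpace (α₁ α₂ : ℝ) := (testTriples α₁ α₂).topologicalClosure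

/-- The embedding of `𝓗₀¹(Ω)` in `L²(Ω)`. -/
def energyEmbedding (α₁ α₂ : ℝ) : EnergySpace α₁ α₂ →L[ℝ] Lp ℝ 2 squareMeasure :=
  (PiLp.proj 2 (fun _ : Fin 3 => Lp ℝ 2 squareMeasure) 0).comp (EnergySpace α₁ α₂).subtypeL

instance : CompleteSpace (EnergySpace α₁ α₂) :=
  (Submodule.isClosed_topologicalClosure _).completeSpace_coe

lemma norm_energyEmbedding_le (w : EnergySpace α₁ α₂) : ‖energyEmbedding α₁ α₂ w‖ ≤ ‖w‖ :=
  PiLp.norm_apply_le w.1 0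

lemma energyEmbedding_ae_eq {w : EnergySpace α₁ α₂} (hw : IsWeightedTriple α₁ α₂ w.1 u gx gy) :
    energyEmbedding α₁ α₂ w =ᵐ[squareMeasure] u :=
  hw.fst

lemma dense_testTriples : Dense {w : EnergySpace α₁ α₂ | w.1 ∈ testTriples α₁ α₂} := by
  intro w
  refine Metric.mem_closure_iff.2 fun ε hε => ?_
  obtain ⟨w', hw', hdist⟩ := Metric.mem_closure_iff.1 w.2 ε hε
  exact ⟨⟨w', subset_closure hw'⟩, hw', hdist⟩

lemma energySpace_induction {P : TripleL2 → Prop} (hP : IsClosed {w | P w})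
    (htest : ∀ w φ, IsTest φ → IsWeightedTriple α₁ α₂ w φ (pdx φ) (pdy φ) → P w)
    (w : EnergySpace α₁ α₂) : P w.1 :=
  closure_minimal (s := (testTriples α₁ α₂ : Set TripleL2)) (t := {w | P w})
    (by rintro w ⟨φ, hφ, hw⟩; exact htest w φ hφ hw) hP w.2

end EnergySpace

section CompactEnergySpace

variable {α₁ α₂ : ℝ}

lemma eLpNorm_energyEmbedding_le (hα₁ : α₁ ∈ Icc 0 (1 / 2)) (hα₂ : α₂ ∈ Icc 0 (1 / 2))
    (w : EnergySpace α₁ α₂) :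
    eLpNorm (energyEmbedding α₁ α₂ w) 4 squareMeasure ≤ ENNReal.ofReal ‖w‖ := by
  refine energySpace_induction
    (P := fun w => eLpNorm (w 0) 4 squareMeasure ≤ ENNReal.ofReal ‖w‖) ?_ ?_ w
  · exact (lowerSemicontinuous_eLpNorm (p := 2) (μ := squareMeasure) 4).isClosed_epigraph.preimage
      (f := fun w : TripleL2 => (w 0, ENNReal.ofReal ‖w‖))
      ((PiLp.continuous_apply 2 _ 0).prodMk (ENNReal.continuous_ofReal.comp continuous_norm))
  · intro w φ hφ hw
    have hpow : ∫ p, φ p ^ 4 ∂squareMeasure ≤ ‖w‖ ^ 4 := by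
      calc ∫ p, φ p ^ 4 ∂squareMeasure ≤ dirichletEnergy α₁ α₂ φ ^ 2 :=
            hφ.integral_pow_four_le hα₁ hα₂
        _ ≤ (‖w‖ ^ 2) ^ 2 := by
            rw [hw.norm_sq_eq_add_dirichletEnergy]
            exact pow_le_pow_left₀ (dirichletEnergy_nonneg _ _ _)
              (le_add_of_nonneg_left (integral_nonneg fun _ => sq_nonneg _)) 2
        _ = ‖w‖ ^ 4 := by ring
    have hfour : (4 : ℝ≥0∞).toReal = ((4 : ℕ) : ℝ) := by simp
    have habs (p : ℝ × ℝ) : |φ p| ^ 4 = φ p ^ 4 := Even.pow_abs (by decide) _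
    rw [eLpNorm_congr_ae hw.fst, (memLp_squareMeasure hφ.continuous 4).eLpNorm_eq_integral_rpow_norm
      (by simp) (by simp)]
    refine ENNReal.ofReal_le_ofReal ?_
    simp only [hfour, Real.rpow_natCast, Real.norm_eq_abs, habs]
    refine (Real.rpow_le_rpow (integral_nonneg fun _ => by positivity) hpow (by simp)).trans_eq ?_
    exact Real.pow_rpow_inv_natCast (norm_nonneg w) (by simp)

lemma exists_isPointwiseMul_energyEmbedding (hα₁ : α₁ ∈ Icc 0 (1 / 2))
    (hα₂ : α₂ ∈ Icc 0 (1 / 2)) : ∃ m, IsPointwiseMul (energyEmbedding α₁ α₂) m :=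
  exists_isPointwiseMul (energyEmbedding α₁ α₂) (C := 1) fun w => by
    rw [one_mul]
    exact eLpNorm_energyEmbedding_le hα₁ hα₂ w

/-- The functional `f ↦ (∫_Q f) / √|Q|` on `L²(Ω)`, whose square is `‖f‖²` when `f` is constant on
`Q` and vanishes elsewhere. -/
def normalizedMean {Q : Set (ℝ × ℝ)} (hQ : MeasurableSet Q) :
    StrongDual ℝ (Lp ℝ 2 squareMeasure) :=
  innerSL ℝ (√(squareMeasure.real Q)⁻¹ • indicatorConstLp 2 hQ (measure_ne_top _ _) (1 : ℝ))

lemma normalizedMean_sq {Q : Set (ℝ × ℝ)} (hQ : MeasurableSet Q) {f : Lp ℝ 2 squareMeasure}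
    {u : ℝ × ℝ → ℝ} (hf : f =ᵐ[squareMeasure] u) :
    normalizedMean hQ f ^ 2 =
      (squareMeasure.real Q)⁻¹ * (∫ p in Q, u p ∂squareMeasure) ^ 2 := by
  rw [normalizedMean, innerSL_apply_apply, real_inner_smul_left, mul_pow,
    Real.sq_sqrt (inv_nonneg.2 measureReal_nonneg), L2.inner_indicatorConstLp_one hQ,
    integral_congr_ae (ae_restrict_of_ae hf)]

lemma isCompactOperator_energyEmbedding (hα₁ : α₁ ∈ Icc 0 (1 / 2)) (hα₂ : α₂ ∈ Icc 0 (1 / 2)) :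
    IsCompactOperator (energyEmbedding α₁ α₂) := by
  refine isCompactOperator_of_forall_norm_sq_le fun ε hε => ?_
  obtain ⟨κ, hκ, Q, hQ, hle⟩ := exists_integral_sq_le_sum_add hα₁ hα₂ hε
  refine ⟨κ, hκ, fun k => (normalizedMean (hQ k)).comp (energyEmbedding α₁ α₂),
    energySpace_induction
      (P := fun w => ‖w 0‖ ^ 2 ≤ ∑ k, normalizedMean (hQ k) (w 0) ^ 2 + ε * ‖w‖ ^ 2) ?_ ?_⟩
  · have : Continuous fun w : TripleL2 => w 0 := PiLp.continuous_apply 2 _ 0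
    exact isClosed_le (by fun_prop) (by fun_prop)
  · intro w φ hφ hw
    simp only [normalizedMean_sq _ hw.fst]
    rw [norm_sq_eq_integral_of_ae_eq hw.fst]
    refine (hle φ hφ).trans (add_le_add_right (mul_le_mul_of_nonneg_left ?_ hε.le) _)
    rw [hw.norm_sq_eq_add_dirichletEnergy]
    exact le_add_of_nonneg_left (integral_nonneg fun _ => sq_nonneg _)

variable {m : EnergySpace α₁ α₂ →L[ℝ] EnergySpace α₁ α₂ →L[ℝ] Lp ℝ 2 squareMeasure}

lemma isCompactEnergySpace_energyEmbedding (hα₁ : α₁ ∈ Icc 0 (1 / 2))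
    (hα₂ : α₂ ∈ Icc 0 (1 / 2)) (hm : IsPointwiseMul (energyEmbedding α₁ α₂) m) :
    IsCompactEnergySpace (energyEmbedding α₁ α₂) m where
  norm_le := norm_energyEmbedding_le
  isCompactOperator := isCompactOperator_energyEmbedding hα₁ hα₂
  symm w w' := by
    refine Lp.ext ?_
    filter_upwards [hm w w', hm w' w] with p hp hp'
    rw [hp, hp', mul_comm]
  dense := by
    refine dense_testTriples.mono ?_
    rintro w' ⟨φ, hφ, hw'⟩
    obtain ⟨C, hC⟩ := hφ.2.1.exists_bound_of_continuous hφ.continuous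
    refine ⟨C, fun w => Lp.norm_le_mul_norm_of_ae_le_mul ?_⟩
    filter_upwards [hm w w', energyEmbedding_ae_eq hw'] with p hp hφp
    rw [hp, hφp, norm_mul, mul_comm]
    exact mul_le_mul_of_nonneg_right (hC p) (norm_nonneg _)

lemma nonnegLpBall_subset_nonnegPotentials {q M : ℝ≥0∞}
    (hm : IsPointwiseMul (energyEmbedding α₁ α₂) m) :
    nonnegLpBall squareMeasure 2 q M ⊆ nonnegPotentials m := by
  rintro v ⟨hv, -⟩ w
  rw [inner_eq_integral_of_ae_eq (ae_eq_refl v) (hm w w)]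
  refine integral_nonneg_of_ae ?_
  filter_upwards [(Lp.coeFn_nonneg v).2 hv] with p hp
  exact mul_nonneg hp (mul_self_nonneg _)

end CompactEnergySpace

section WeakDerivative

variable {α₁ α₂ : ℝ} {φ χ ω : ℝ × ℝ → ℝ}

lemma IsTest.integral_mul_fderiv_eq_neg (hχ : IsTest χ) (hφ : IsTest φ) (v : ℝ × ℝ) :
    ∫ p, χ p * fderiv ℝ φ p v ∂squareMeasure = -∫ p, fderiv ℝ χ p v * φ p ∂squareMeasure := by
  have hdφ := hφ.continuous_fderiv_apply v
  have hdχ := hχ.continuous_fderiv_apply v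
  rw [setIntegral_eq_integral_of_forall_compl_eq_zero fun p hp => by
      rw [hχ.eq_zero_of_notMem hp, zero_mul],
    setIntegral_eq_integral_of_forall_compl_eq_zero fun p hp => by
      rw [hφ.eq_zero_of_notMem hp, mul_zero]]
  exact integral_mul_fderiv_eq_neg_fderiv_mul_of_integrable
    ((hdχ.mul hφ.continuous).integrable_of_hasCompactSupport hφ.2.1.mul_left)
    ((hχ.continuous.mul hdφ).integrable_of_hasCompactSupport hχ.2.1.mul_right)
    ((hχ.continuous.mul hφ.continuous).integrable_of_hasCompactSupport hχ.2.1.mul_right)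
    (fun p _ => hχ.differentiable p) (fun p _ => hφ.differentiable p)

lemma isOpen_Omega : IsOpen Omega := isOpen_Ioo.prod isOpen_Ioo

lemma IsTest.continuous_inv_mul (hφ : IsTest φ) (hω : ContinuousOn ω Omega)
    (hω₀ : ∀ p ∈ Omega, ω p ≠ 0) : Continuous fun p => (ω p)⁻¹ * φ p :=
  continuous_of_tsupport fun p hp =>
    have hpO := hφ.2.2 (tsupport_mul_subset_right hp)
    ((hω.continuousAt (isOpen_Omega.mem_nhds hpO)).inv₀ (hω₀ p hpO)).mul
      hφ.continuous.continuousAt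

lemma integral_energySpace_mul_fderiv (hω : ContinuousOn ω Omega) (hω₀ : ∀ p ∈ Omega, ω p ≠ 0)
    {v : ℝ × ℝ} {i : Fin 3} (hi : ∀ w χ, IsTest χ → IsWeightedTriple α₁ α₂ w χ (pdx χ) (pdy χ) →
      w i =ᵐ[squareMeasure] fun p => ω p * fderiv ℝ χ p v)
    (w : EnergySpace α₁ α₂) (hφ : IsTest φ) :
    ∫ p, w.1 0 p * fderiv ℝ φ p v ∂squareMeasure =
      -∫ p, (ω p)⁻¹ * w.1 i p * φ p ∂squareMeasure := by
  have hdφ := memLp_squareMeasure (hφ.continuous_fderiv_apply v) 2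
  have hωφ := memLp_squareMeasure (hφ.continuous_inv_mul hω hω₀) 2
  have hinner : inner ℝ (w.1 0) (hdφ.toLp _) = -inner ℝ (w.1 i) (hωφ.toLp _) := by
    refine energySpace_induction
      (P := fun w => inner ℝ (w 0) (hdφ.toLp _) = -inner ℝ (w i) (hωφ.toLp _)) ?_ ?_ w
    · have happly (j : Fin 3) : Continuous fun w : TripleL2 => w j := PiLp.continuous_apply 2 _ j
      exact isClosed_eq ((happly 0).inner continuous_const) ((happly i).inner continuous_const).neg
    · intro w χ hχ hw
      rw [inner_eq_integral_of_ae_eq hw.fst hdφ.coeFn_toLp,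
        inner_eq_integral_of_ae_eq (hi w χ hχ hw) hωφ.coeFn_toLp,
        hχ.integral_mul_fderiv_eq_neg hφ]
      refine congrArg Neg.neg (integral_congr_ae ?_)
      filter_upwards [ae_restrict_mem measurableSet_Omega] with p hp
      have := hω₀ p hp
      field_simp
  rw [inner_eq_integral_of_ae_eq (ae_eq_refl _) hdφ.coeFn_toLp,
    inner_eq_integral_of_ae_eq (ae_eq_refl _) hωφ.coeFn_toLp] at hinner
  rw [hinner]
  simp only [mul_left_comm, mul_assoc]

lemma continuousOn_snd_rpow (α : ℝ) : ContinuousOn (fun p : ℝ × ℝ => p.2 ^ α) Omega :=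
  continuousOn_snd.rpow_const fun _ hp => Or.inl hp.2.1.ne'

lemma continuousOn_fst_rpow (α : ℝ) : ContinuousOn (fun p : ℝ × ℝ => p.1 ^ α) Omega :=
  continuousOn_fst.rpow_const fun _ hp => Or.inl hp.1.1.ne'

lemma snd_rpow_ne_zero (α : ℝ) {p : ℝ × ℝ} (hp : p ∈ Omega) : p.2 ^ α ≠ 0 :=
  (Real.rpow_pos_of_pos hp.2.1 _).ne'

lemma fst_rpow_ne_zero (α : ℝ) {p : ℝ × ℝ} (hp : p ∈ Omega) : p.1 ^ α ≠ 0 :=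
  (Real.rpow_pos_of_pos hp.1.1 _).ne'

lemma isWeightedTriple_self (w : TripleL2) : IsWeightedTriple α₁ α₂ w (w 0)
    (fun p => (p.2 ^ α₁)⁻¹ * w 1 p) (fun p => (p.1 ^ α₂)⁻¹ * w 2 p) where
  fst := ae_eq_refl _
  snd := by
    filter_upwards [ae_restrict_mem measurableSet_Omega] with p hp
    rw [mul_inv_cancel_left₀ (snd_rpow_ne_zero α₁ hp)]
  trd := by
    filter_upwards [ae_restrict_mem measurableSet_Omega] with p hp
    rw [mul_inv_cancel_left₀ (fst_rpow_ne_zero α₂ hp)]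

lemma locallyIntegrableOn_Omega (f : Lp ℝ 2 squareMeasure) : LocallyIntegrableOn f Omega volume :=
  IntegrableOn.locallyIntegrableOn ((Lp.memLp f).integrable one_le_two)

lemma hasWeakDerivXOn_energySpace (w : EnergySpace α₁ α₂) :
    HasWeakDerivXOn Omega (w.1 0) fun p => (p.2 ^ α₁)⁻¹ * w.1 1 p :=
  have hω := continuousOn_snd_rpow α₁
  have hω₀ : ∀ p ∈ Omega, p.2 ^ α₁ ≠ 0 := fun _ => snd_rpow_ne_zero α₁
  ⟨locallyIntegrableOn_Omega _,
    (locallyIntegrableOn_Omega _).continuousOn_mul (hω.inv₀ hω₀) isOpen_Omega.isLocallyClosed,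
    fun _ hφ => integral_energySpace_mul_fderiv hω hω₀ (fun _ _ _ hw => hw.snd) w hφ⟩

lemma hasWeakDerivYOn_energySpace (w : EnergySpace α₁ α₂) :
    HasWeakDerivYOn Omega (w.1 0) fun p => (p.1 ^ α₂)⁻¹ * w.1 2 p :=
  have hω := continuousOn_fst_rpow α₂
  have hω₀ : ∀ p ∈ Omega, p.1 ^ α₂ ≠ 0 := fun _ => fst_rpow_ne_zero α₂
  ⟨locallyIntegrableOn_Omega _,
    (locallyIntegrableOn_Omega _).continuousOn_mul (hω.inv₀ hω₀) isOpen_Omega.isLocallyClosed,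
    fun _ hφ => integral_energySpace_mul_fderiv hω hω₀ (fun _ _ _ hw => hw.trd) w hφ⟩

end WeakDerivative

section Translation

variable {α₁ α₂ : ℝ} {u gx gy V : ℝ × ℝ → ℝ}

lemma memH10_energySpace (w : EnergySpace α₁ α₂) :
    MemH10 α₁ α₂ (w.1 0) (fun p => (p.2 ^ α₁)⁻¹ * w.1 1 p) fun p => (p.1 ^ α₂)⁻¹ * w.1 2 p := by
  have hw : IsWeightedTriple α₁ α₂ w.1 _ _ _ := isWeightedTriple_self w.1
  refine ⟨⟨Lp.memLp _, hasWeakDerivXOn_energySpace w, hasWeakDerivYOn_energySpace w,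
    (memLp_congr_ae hw.snd).1 (Lp.memLp _), (memLp_congr_ae hw.trd).1 (Lp.memLp _)⟩, fun ε hε => ?_⟩
  obtain ⟨w', ⟨φ, hφ, hw'⟩, hdist⟩ := Metric.mem_closure_iff.1 w.2 ε hε
  rw [dist_eq_norm, ← (hw.sub hw').H1Norm_eq] at hdist
  exact ⟨φ, hφ, hdist⟩

lemma MemH10.exists_isWeightedTriple (h : MemH10 α₁ α₂ u gx gy) (hα₁ : 0 ≤ α₁) (hα₂ : 0 ≤ α₂) :
    ∃ w : EnergySpace α₁ α₂, IsWeightedTriple α₁ α₂ w.1 u gx gy := by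
  obtain ⟨hH1, happrox⟩ := h
  obtain ⟨w, hw⟩ := _root_.exists_isWeightedTriple hH1.memL2 hH1.wgx hH1.wgy
  refine ⟨⟨w, Metric.mem_closure_iff.2 fun ε hε => ?_⟩, hw⟩
  obtain ⟨φ, hφ, hnorm⟩ := happrox ε hε
  obtain ⟨w', hw'⟩ := hφ.exists_isWeightedTriple hα₁ hα₂
  refine ⟨w', ⟨φ, hφ, hw'⟩, ?_⟩
  rw [dist_eq_norm, ← (hw.sub hw').H1Norm_eq]
  exact hnorm

variable {m : EnergySpace α₁ α₂ →L[ℝ] EnergySpace α₁ α₂ →L[ℝ] Lp ℝ 2 squareMeasure}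
  {v : Lp ℝ 2 squareMeasure}

lemma IsPointwiseMul.ae_eq_sq (hm : IsPointwiseMul (energyEmbedding α₁ α₂) m)
    {w : EnergySpace α₁ α₂} (hw : IsWeightedTriple α₁ α₂ w.1 u gx gy) :
    m w w =ᵐ[squareMeasure] fun p => u p ^ 2 := by
  filter_upwards [hm w w, energyEmbedding_ae_eq hw] with p hmp hup
  rw [hmp, hup, sq]

lemma IsPointwiseMul.integrable_mul_sq (hm : IsPointwiseMul (energyEmbedding α₁ α₂) m)
    (hv : v =ᵐ[squareMeasure] V) {w : EnergySpace α₁ α₂}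
    (hw : IsWeightedTriple α₁ α₂ w.1 u gx gy) :
    Integrable (fun p => V p * u p ^ 2) squareMeasure :=
  ((Lp.memLp v).integrable_mul (Lp.memLp (m w w))).congr (hv.mul (hm.ae_eq_sq hw))

lemma IsPointwiseMul.aForm_eq_perturbedForm (hm : IsPointwiseMul (energyEmbedding α₁ α₂) m)
    (hv : v =ᵐ[squareMeasure] V) {w : EnergySpace α₁ α₂}
    (hw : IsWeightedTriple α₁ α₂ w.1 u gx gy) :
    aForm α₁ α₂ V u gx gy u gx gy = perturbedForm (energyEmbedding α₁ α₂) m v w := by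
  have hx : Integrable (fun p => (p.2 ^ α₁ * gx p) ^ 2) squareMeasure :=
    ((memLp_congr_ae hw.snd).1 (Lp.memLp _)).integrable_sq
  have hy : Integrable (fun p => (p.1 ^ α₂ * gy p) ^ 2) squareMeasure :=
    ((memLp_congr_ae hw.trd).1 (Lp.memLp _)).integrable_sq
  have hxy : Integrable (fun p => (p.2 ^ α₁ * gx p) ^ 2 + (p.1 ^ α₂ * gy p) ^ 2) squareMeasure :=
    hx.add hy
  have hnorm : ‖w‖ ^ 2 = _ := hw.norm_sq
  rw [perturbedForm, hnorm, norm_sq_eq_integral_of_ae_eq (energyEmbedding_ae_eq hw),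
    inner_eq_integral_of_ae_eq hv (hm.ae_eq_sq hw), aForm]
  simp only [mul_assoc (V _), ← sq]
  rw [integral_add hxy (hm.integrable_mul_sq hv hw), integral_add hx hy]
  ring

variable {k : ℕ} {w : Fin k → EnergySpace α₁ α₂} {φ φx φy : Fin k → ℝ × ℝ → ℝ}

lemma linearIndependent_energyEmbedding_iff
    (hw : ∀ i, IsWeightedTriple α₁ α₂ (w i).1 (φ i) (φx i) (φy i)) :
    LinearIndependent ℝ (energyEmbedding α₁ α₂ ∘ w) ↔
      ∀ c : Fin k → ℝ, (∀ᵐ p ∂squareMeasure, ∑ i, c i * φ i p = 0) → c = 0 := by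
  rw [Fintype.linearIndependent_iff]
  refine forall_congr' fun c => imp_congr ?_ funext_iff.symm
  have hsum : energyEmbedding α₁ α₂ (∑ i, c i • w i) =ᵐ[squareMeasure] fun p => ∑ i, c i * φ i p :=
    energyEmbedding_ae_eq <| by simpa using IsWeightedTriple.sum_smul hw c
  simp only [Function.comp_apply, ← map_smul, ← map_sum]
  rw [Lp.eq_zero_iff_ae_eq_zero]
  exact ⟨hsum.symm.trans, hsum.trans⟩

lemma IsPointwiseMul.rayleighSup_eq (hm : IsPointwiseMul (energyEmbedding α₁ α₂) m)
    (hv : v =ᵐ[squareMeasure] V)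
    (hw : ∀ i, IsWeightedTriple α₁ α₂ (w i).1 (φ i) (φx i) (φy i)) :
    rayleighSup α₁ α₂ V φ φx φy = sSup (perturbedForm (energyEmbedding α₁ α₂) m v ''
      {x | x ∈ Submodule.span ℝ (range w) ∧ ‖energyEmbedding α₁ α₂ x‖ = 1}) := by
  have hsum (c : Fin k → ℝ) : IsWeightedTriple α₁ α₂ (∑ i, c i • w i : EnergySpace α₁ α₂).1
      (fun p => ∑ i, c i * φ i p) (fun p => ∑ i, c i * φx i p) (fun p => ∑ i, c i * φy i p) := by
    simpa using IsWeightedTriple.sum_smul hw c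
  have hnorm (c : Fin k → ℝ) : ∫ p in Omega, (∑ i, c i * φ i p) ^ 2 = 1 ↔
      ‖energyEmbedding α₁ α₂ (∑ i, c i • w i)‖ = 1 := by
    rw [← norm_sq_eq_integral_of_ae_eq (energyEmbedding_ae_eq (hsum c)),
      pow_eq_one_iff_of_nonneg (norm_nonneg _) two_ne_zero]
  rw [rayleighSup]
  congr 1
  ext s
  simp only [hnorm, hm.aForm_eq_perturbedForm hv (hsum _), mem_image, mem_ofPred_eq,
    Submodule.mem_span_range_iff_exists_fun]
  constructor
  · rintro ⟨c, hc, rfl⟩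
    exact ⟨_, ⟨⟨c, rfl⟩, hc⟩, rfl⟩
  · rintro ⟨_, ⟨⟨c, rfl⟩, hc⟩, rfl⟩
    exact ⟨c, hc, rfl⟩

lemma IsPointwiseMul.minmaxSet_eq (hm : IsPointwiseMul (energyEmbedding α₁ α₂) m) (hα₁ : 0 ≤ α₁)
    (hα₂ : 0 ≤ α₂) (hv : v =ᵐ[squareMeasure] V) (k : ℕ) : minmaxSet α₁ α₂ V k =
      minmaxValues (energyEmbedding α₁ α₂) (perturbedForm (energyEmbedding α₁ α₂) m v) k := by
  ext r
  constructor
  · rintro ⟨φ, φx, φy, hφ, hindep, rfl⟩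
    choose w hw using fun i => (hφ i).1.exists_isWeightedTriple hα₁ hα₂
    exact ⟨w, (linearIndependent_energyEmbedding_iff hw).2 hindep, (hm.rayleighSup_eq hv hw).symm⟩
  · rintro ⟨w, hindep, rfl⟩
    have hw := fun i => isWeightedTriple_self (α₁ := α₁) (α₂ := α₂) (w i).1
    exact ⟨_, _, _, fun i => ⟨memH10_energySpace (w i), hm.integrable_mul_sq hv (hw i)⟩,
      (linearIndependent_energyEmbedding_iff hw).1 hindep, (hm.rayleighSup_eq hv hw).symm⟩

lemma IsPointwiseMul.gap_eq (hm : IsPointwiseMul (energyEmbedding α₁ α₂) m) (hα₁ : 0 ≤ α₁)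
    (hα₂ : 0 ≤ α₂) (hv : v =ᵐ[squareMeasure] V) : gap α₁ α₂ V =
      minmaxValue (energyEmbedding α₁ α₂) (perturbedForm (energyEmbedding α₁ α₂) m v) 2 -
        minmaxValue (energyEmbedding α₁ α₂) (perturbedForm (energyEmbedding α₁ α₂) m v) 1 := by
  rw [gap, lamk, lamk, hm.minmaxSet_eq hα₁ hα₂ hv, hm.minmaxSet_eq hα₁ hα₂ hv, minmaxValue,
    minmaxValue]

lemma memSp_of_mem_nonnegLpBall {ppow M : ℝ}
    (hv : v ∈ nonnegLpBall squareMeasure 2 (ENNReal.ofReal ppow) (ENNReal.ofReal M)) :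
    MemSp ppow M v :=
  ⟨⟨Lp.aestronglyMeasurable v, hv.2.trans_lt ENNReal.ofReal_lt_top⟩, (Lp.coeFn_nonneg v).2 hv.1,
    hv.2⟩

lemma MemSp.exists_mem_nonnegLpBall {ppow M : ℝ} (hV : MemSp ppow M V) (hp : 2 ≤ ppow) :
    ∃ v ∈ nonnegLpBall squareMeasure 2 (ENNReal.ofReal ppow) (ENNReal.ofReal M),
      v =ᵐ[squareMeasure] V := by
  have hV₂ : MemLp V 2 squareMeasure := hV.1.mono_exponent (by simpa using hp)
  refine ⟨hV₂.toLp V, ⟨(Lp.coeFn_nonneg _).1 ?_, ?_⟩, hV₂.coeFn_toLp⟩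
  · exact EventuallyLE.trans_eq hV.2.1 hV₂.coeFn_toLp.symm
  · exact (eLpNorm_congr_ae hV₂.coeFn_toLp).trans_le hV.2.2

theorem gap_minimizer_exists_general {α₁ α₂ ppow : ℝ} {M : ℝ≥0} (hα₁ : α₁ ∈ Icc 0 (1 / 2))
    (hα₂ : α₂ ∈ Icc 0 (1 / 2)) (hp : 2 ≤ ppow) :
    ∃ Vstar : ℝ × ℝ → ℝ, MemSp ppow M Vstar ∧
      ∀ V : ℝ × ℝ → ℝ, MemSp ppow M V → gap α₁ α₂ Vstar ≤ gap α₁ α₂ V := by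
  obtain ⟨m, hm⟩ := exists_isPointwiseMul_energyEmbedding hα₁ hα₂
  have hp' : 2 ≤ ENNReal.ofReal ppow := by simpa using hp
  obtain ⟨v₀, hv₀, hmin⟩ := exists_forall_gap_le (isCompactEnergySpace_energyEmbedding hα₁ hα₂ hm)
    (nonnegLpBall_subset_nonnegPotentials hm) (convex_nonnegLpBall (one_le_two.trans hp'))
    isClosed_nonnegLpBall (isBounded_nonnegLpBall hp' (M := ENNReal.ofReal M) ENNReal.ofReal_ne_top)
    ⟨0, zero_mem_nonnegLpBall⟩
  refine ⟨v₀, memSp_of_mem_nonnegLpBall hv₀, fun V hV => ?_⟩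
  obtain ⟨v, hv, hvV⟩ := hV.exists_mem_nonnegLpBall hp
  rw [hm.gap_eq hα₁.1 hα₂.1 (ae_eq_refl v₀), hm.gap_eq hα₁.1 hα₂.1 hvV]
  exact hmin v hv

end Translation

/-- Existence of a gap-minimizing potential: for `p > 2`, the
infimum of the fundamental gap `Γ` over `S_p` is attained by some `V* ∈ S_p`. -/
theorem gap_minimizer_exists (α₁ α₂ ppow M : ℝ)
    (hα₁ : α₁ ∈ Ioo (0:ℝ) (1/2)) (hα₂ : α₂ ∈ Ioo (0:ℝ) (1/2))
    (hp : 2 < ppow) (hM : 0 < M) :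
    ∃ Vstar : ℝ × ℝ → ℝ, MemSp ppow M Vstar ∧
      ∀ V : ℝ × ℝ → ℝ, MemSp ppow M V →
        gap α₁ α₂ Vstar ≤ gap α₁ α₂ V :=
  gap_minimizer_exists_general (M := ⟨M, hM.le⟩) (Ioo_subset_Icc_self hα₁)
    (Ioo_subset_Icc_self hα₂) hp.le
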